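/- arXiv:1702.04915 — 2 statements merged into one kernel-verified Lean document; each statement's English description precedes it below -/
import Mathlib

section
/- There exist a constant c > 0 and a symmetric positive-definite 2×2 real matrix Σ such that, under P^+_{unif,L}, the law of √L (π̃^L_1 − c e⃗_1) converges weakly, as L → ∞, to the centered Gaussian measure N(0,Σ) on ℝ²; i.e. for every bounded continuous f : ℝ² → ℝ, lim_{L→∞} E^+_{unif,L}[ f(√L(π̃^L_1 − c e⃗_1)) ] = ∫_{ℝ²} f dN(0,Σ). -/
open Filter Set

/-- One admissible step of a nearest-neighbour walk on `ℤ²`. -/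
def IsStep (s : ℤ × ℤ) : Prop :=
  s = (1, 0) ∨ s = (-1, 0) ∨ s = (0, 1) ∨ s = (0, -1)

/-- The set `Ω_L` of prudent paths of length `L`. -/
def prudentSet (L : ℕ) : Set (Fin (L + 1) → ℤ × ℤ) :=
  {π | π 0 = (0, 0) ∧ ∀ i : Fin L,
    IsStep (π i.succ - π i.castSucc) ∧
    ∀ k : ℕ, 1 ≤ k → ∀ j : Fin (L + 1), j ≤ i.castSucc →
      π i.castSucc + (k : ℤ) • (π i.succ - π i.castSucc) ≠ π j}

/-- The uniform probability of a set `A` of paths under `P_{unif,L}`. -/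
noncomputable def probUnif (L : ℕ) (A : Set (Fin (L + 1) → ℤ × ℤ)) : ℝ :=
  (Nat.card ↥(A ∩ prudentSet L) : ℝ) / (Nat.card ↥(prudentSet L) : ℝ)

/-- Coercion `ℤ² → ℝ²`. -/
def toR (p : ℤ × ℤ) : ℝ × ℝ := ((p.1 : ℝ), (p.2 : ℝ))

/-- The rescaled interpolated path `π̃^L : [0,1] → ℝ²`. -/
noncomputable def rescaled (L : ℕ) (π : Fin (L + 1) → ℤ × ℤ) (t : ℝ) : ℝ × ℝ :=
  let n : ℕ := ⌊t * L⌋₊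
  let p : ℝ × ℝ := toR (π ⟨min n L, by omega⟩)
  let q : ℝ × ℝ := toR (π ⟨min (n + 1) L, by omega⟩)
  (L : ℝ)⁻¹ • (p + (t * L - (n : ℝ)) • (q - p))

/-- Euclidean norm on `ℝ²`. -/
noncomputable def enorm2 (v : ℝ × ℝ) : ℝ := Real.sqrt (v.1 ^ 2 + v.2 ^ 2)

/-- The four diagonal directions. -/
def evec : ℕ → ℝ × ℝ
  | 1 => (1, 1)
  | 2 => (-1, 1)
  | 3 => (-1, -1)
  | 4 => (1, -1)
  | _ => (0, 0)

/-- The set `Ω_L^+` of 2-sided prudent paths of length `L` (north-east direction):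
prudent paths that never take a step in the direction of the quadrant
`{(x,y) : x ≤ 0 ∧ y ≤ 0}`, whose endpoint is the top-right corner of the smallest
rectangle containing the path, and which start with an east step. -/
def twoSidedSet (L : ℕ) : Set (Fin (L + 1) → ℤ × ℤ) :=
  {π | π ∈ prudentSet L ∧
    (∀ i : Fin L, ∀ k : ℕ, 1 ≤ k →
      ¬((π i.castSucc + (k : ℤ) • (π i.succ - π i.castSucc)).1 ≤ 0 ∧
        (π i.castSucc + (k : ℤ) • (π i.succ - π i.castSucc)).2 ≤ 0)) ∧
    (∀ i : Fin (L + 1),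
      (π i).1 ≤ (π (Fin.last L)).1 ∧ (π i).2 ≤ (π (Fin.last L)).2) ∧
    (∀ h : 0 < L, π ⟨1, by omega⟩ = (1, 0))}

/-- The uniform probability of a set `A` of paths under `P^+_{unif,L}`. -/
noncomputable def probUnifPlus (L : ℕ) (A : Set (Fin (L + 1) → ℤ × ℤ)) : ℝ :=
  (Nat.card ↥(A ∩ twoSidedSet L) : ℝ) / (Nat.card ↥(twoSidedSet L) : ℝ)
open Matrix MeasureTheory

/-- Expectation with respect to the uniform law `P^+_{unif,L}` on 2-sided prudent paths. -/
noncomputable def expUnifPlus (L : ℕ) (g : (Fin (L + 1) → ℤ × ℤ) → ℝ) : ℝ :=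
  (∑ᶠ π ∈ twoSidedSet L, g π) / (Nat.card ↥(twoSidedSet L) : ℝ)

/-- The density of the centered Gaussian measure `N(0,Σ)` on `ℝ²` with (positive-definite)
covariance matrix `Σ`. -/
noncomputable def gaussDensity2 (S : Matrix (Fin 2) (Fin 2) ℝ) (v : ℝ × ℝ) : ℝ :=
  (2 * Real.pi * Real.sqrt S.det)⁻¹ *
    Real.exp (-(1 / 2) * (![v.1, v.2] ⬝ᵥ (S⁻¹ *ᵥ ![v.1, v.2])))

/-!
Cut a 2-sided walk each time it is back at the top-right corner of its visited sites. The blocks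
consist of a step out of the corner, upwards or to the right, possibly followed by an excursion
along the new border, and they can be concatenated freely: the endpoint is a sum of block
displacements. The generating function of upward blocks equals `1 / 2` at some `ρ < 0.414`, strictly
inside its disc of convergence, so giving weight `ρ` to each step turns the blocks into independent
ones, whose law has exponential moments.

The characteristic function of the endpoint at length `L` is then a coefficient of
`1 / (1 - F)`, where `F` is the transform of a block in its length and displacement. When the
displacement carries a factor `1 / √L`, the simple root of `1 - F` at `1` moves by a quadratic form
times `1 / L`, whose `L`-th power is the Gaussian limit. Lévy continuity concludes.
-/

section RootsOfLimits

open Metric Topology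

variable {ι : Type*} {p : Filter ι} {F : ι → ℂ → ℂ} {f : ℂ → ℂ}

theorem exists_pos_eventually_mul_norm_sub_le_norm {z₀ : ℂ} (hfd : DifferentiableAt ℂ f z₀)
    (hf₀ : f z₀ = 0) (hf' : deriv f z₀ ≠ 0) :
    ∃ m > 0, ∀ᶠ z in 𝓝 z₀, m * ‖z - z₀‖ ≤ ‖f z‖ := by
  have hpos : 0 < ‖dslope f z₀ z₀‖ := by simpa [dslope_same] using hf'
  refine ⟨‖dslope f z₀ z₀‖ / 2, half_pos hpos, ?_⟩
  filter_upwards [(continuousAt_dslope_same.2 hfd).norm.eventually_const_lt (half_lt_self hpos)]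
    with z hz
  have hfz : f z = (z - z₀) • dslope f z₀ z := by rw [sub_smul_dslope, hf₀, sub_zero]
  rw [hfz, norm_smul, mul_comm]
  gcongr

theorem eventually_exists_eq_zero_of_le_norm_sphere {z₀ : ℂ} {r ε : ℝ} (hr : 0 < r) (hε : 0 < ε)
    (hFf : TendstoUniformlyOn F f p (closedBall z₀ r))
    (hFd : ∀ i, DifferentiableOn ℂ (F i) (closedBall z₀ r)) (hF' : ∀ᶠ i in p, deriv (F i) z₀ ≠ 0)
    (hf₀ : f z₀ = 0) (hf : ∀ z ∈ sphere z₀ r, ε ≤ ‖f z‖) :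
    ∀ᶠ i in p, ∃ w ∈ closedBall z₀ r, F i w = 0 := by
  filter_upwards [hF', Metric.tendstoUniformlyOn_iff.1 hFf (ε / 4) (by positivity)] with i hi hclose
  have hcenter : ‖F i z₀‖ < ε / 4 := by
    simpa [hf₀] using hclose z₀ (mem_closedBall_self hr.le)
  have hsphere : ∀ z ∈ sphere z₀ r, ε / 2 ≤ ‖F i z - F i z₀‖ := by
    intro z hz
    have hd := hclose z (sphere_subset_closedBall hz)
    rw [dist_eq_norm] at hd
    have h₁ : ‖f z‖ - ‖F i z‖ ≤ ‖f z - F i z‖ := norm_sub_norm_le _ _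
    have h₂ : ‖F i z‖ - ‖F i z₀‖ ≤ ‖F i z - F i z₀‖ := norm_sub_norm_le _ _
    linarith [hf z hz]
  have hderiv : HasDerivAt (F i) (deriv (F i) z₀) z₀ :=
    ((hFd i).differentiableAt (closedBall_mem_nhds z₀ hr)).hasDerivAt
  have hcov := ((hFd i).mono (closure_ball_subset_closedBall)).diffContOnCl
    |>.ball_subset_image_closedBall hr hsphere
      ((hderiv.eventually_ne hi).frequently.filter_mono nhdsWithin_le_nhds)
  obtain ⟨w, hw, hw₀⟩ := hcov (show (0 : ℂ) ∈ _ by rw [mem_ball, dist_zero_left]; linarith)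
  exact ⟨w, hw, hw₀⟩

theorem exists_tendsto_eventually_eq_zero [p.NeBot] {U : Set ℂ} {z₀ : ℂ} (hU : IsOpen U)
    (hz₀ : z₀ ∈ U) (hFf : TendstoLocallyUniformlyOn F f p U)
    (hFd : ∀ i, DifferentiableOn ℂ (F i) U) (hf₀ : f z₀ = 0) (hf' : deriv f z₀ ≠ 0) :
    ∃ w : ι → ℂ, Tendsto w p (𝓝 z₀) ∧ ∀ᶠ i in p, F i (w i) = 0 := by
  have hfd : DifferentiableOn ℂ f U := hFf.differentiableOn (.of_forall hFd) hU
  obtain ⟨m, hm, hlow⟩ := exists_pos_eventually_mul_norm_sub_le_norm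
    (hfd.differentiableAt (hU.mem_nhds hz₀)) hf₀ hf'
  obtain ⟨r, hr, hrU⟩ := nhds_basis_closedBall.mem_iff.1 (inter_mem (hU.mem_nhds hz₀) hlow)
  have hunif : TendstoUniformlyOn F f p (closedBall z₀ r) :=
    (tendstoLocallyUniformlyOn_iff_forall_isCompact hU).1 hFf _ (fun z hz => (hrU hz).1)
      (isCompact_closedBall z₀ r)
  have hderiv : ∀ᶠ i in p, deriv (F i) z₀ ≠ 0 :=
    ((hFf.deriv (.of_forall hFd) hU).tendsto_at hz₀).eventually_ne hf'
  have hroot := eventually_exists_eq_zero_of_le_norm_sphere (ε := m * r) hr (by positivity) hunif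
    (fun i => (hFd i).mono fun z hz => (hrU hz).1) hderiv hf₀ fun z hz => by
      simpa [mem_sphere_iff_norm.1 hz] using (hrU (sphere_subset_closedBall hz)).2
  choose! w hw hw₀ using fun i (h : ∃ w ∈ closedBall z₀ r, F i w = 0) => h
  refine ⟨w, ?_, hroot.mono hw₀⟩
  rw [Metric.tendsto_nhds]
  intro ε hε
  filter_upwards [hroot, Metric.tendstoUniformlyOn_iff.1 hunif (m * ε) (by positivity)]
    with i hi hclose
  have hdist : dist (f (w i)) (F i (w i)) < m * ε := hclose _ (hw i hi)
  rw [hw₀ i hi, dist_zero_right] at hdist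
  rw [dist_eq_norm]
  exact lt_of_mul_lt_mul_left ((hrU (hw i hi)).2.trans_lt hdist) hm.le

end RootsOfLimits

section CoefficientAsymptotics

open Metric Topology

variable {ι : Type*} {p : Filter ι} {F : ι → ℂ → ℂ} {f : ℂ → ℂ} {w : ι → ℂ} {w₀ : ℂ}

theorem tendstoLocallyUniformlyOn_dslope_of_notMem {s : Set ℂ}
    (hFf : TendstoLocallyUniformlyOn F f p s) (hf : ContinuousOn f s)
    (hw : Tendsto w p (𝓝 w₀)) (hFw : Tendsto (fun i => F i (w i)) p (𝓝 (f w₀))) (hw₀ : w₀ ∉ s) :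
    TendstoLocallyUniformlyOn (fun i => dslope (F i) (w i)) (dslope f w₀) p s := by
  rw [tendstoLocallyUniformlyOn_iff_forall_tendsto] at hFf ⊢
  intro x hx
  have hxw : x ≠ w₀ := ne_of_mem_of_not_mem hx hw₀
  have hwfst : Tendsto (fun y : ι × ℂ => w y.1) (p ×ˢ 𝓝[s] x) (𝓝 w₀) := hw.comp tendsto_fst
  have hsnd : Tendsto (fun y : ι × ℂ => y.2) (p ×ˢ 𝓝[s] x) (𝓝 x) :=
    tendsto_snd.mono_right nhdsWithin_le_nhds
  have hfsnd : Tendsto (fun y : ι × ℂ => f y.2) (p ×ˢ 𝓝[s] x) (𝓝 (f x)) :=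
    (hf x hx).tendsto.comp tendsto_snd
  have hF : Tendsto (fun y : ι × ℂ => F y.1 y.2) (p ×ˢ 𝓝[s] x) (𝓝 (f x)) :=
    hfsnd.congr_uniformity (hFf x hx)
  have hlimit : Tendsto (fun y : ι × ℂ => dslope f w₀ y.2) (p ×ˢ 𝓝[s] x) (𝓝 (slope f w₀ x)) := by
    have hslope : Tendsto (fun y : ι × ℂ => slope f w₀ y.2) (p ×ˢ 𝓝[s] x) (𝓝 (slope f w₀ x)) :=
      ((hsnd.sub_const w₀).inv₀ (sub_ne_zero.2 hxw)).smul (hfsnd.sub_const (f w₀))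
    refine hslope.congr' ?_
    filter_upwards [hsnd.eventually_ne hxw] with y hy using (dslope_of_ne f hy).symm
  have happrox : Tendsto (fun y : ι × ℂ => dslope (F y.1) (w y.1) y.2) (p ×ˢ 𝓝[s] x)
      (𝓝 (slope f w₀ x)) := by
    have hslope : Tendsto (fun y : ι × ℂ => slope (F y.1) (w y.1) y.2) (p ×ˢ 𝓝[s] x)
        (𝓝 (slope f w₀ x)) :=
      ((hsnd.sub hwfst).inv₀ (sub_ne_zero.2 hxw)).smul (hF.sub (hFw.comp tendsto_fst))
    refine hslope.congr' ?_
    filter_upwards [(hsnd.sub hwfst).eventually_ne (sub_ne_zero.2 hxw)] with y hy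
      using (dslope_of_ne _ (sub_ne_zero.1 hy)).symm
  exact (hlimit.prodMk_nhds happrox).mono_right (nhds_le_uniformity _)

theorem tendstoLocallyUniformlyOn_dslope [p.NeBot] {c : ℂ} {R : ℝ}
    (hFf : TendstoLocallyUniformlyOn F f p (ball c R))
    (hFd : ∀ i, DifferentiableOn ℂ (F i) (ball c R)) (hw : Tendsto w p (𝓝 w₀))
    (hw₀ : w₀ ∈ ball c R) :
    TendstoLocallyUniformlyOn (fun i => dslope (F i) (w i)) (dslope f w₀) p (ball c R) := by
  have hfd : DifferentiableOn ℂ f (ball c R) := hFf.differentiableOn (.of_forall hFd) isOpen_ball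
  have hFw : Tendsto (fun i => F i (w i)) p (𝓝 (f w₀)) :=
    hFf.tendsto_comp (hfd.continuousOn w₀ hw₀) hw₀ (by rwa [isOpen_ball.nhdsWithin_eq hw₀])
  rw [tendstoLocallyUniformlyOn_iff_forall_isCompact isOpen_ball]
  intro K hKR hK
  obtain ⟨r, hrR, hr⟩ : ∃ r < R, insert w₀ K ⊆ ball c r :=
    exists_lt_subset_ball (hK.insert w₀).isClosed (insert_subset hw₀ hKR)
  have hsubset : closedBall c r ⊆ ball c R := closedBall_subset_ball hrR
  have hsphere : TendstoUniformlyOn (fun i => dslope (F i) (w i)) (dslope f w₀) p (sphere c r) := by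
    have hsR : sphere c r ⊆ ball c R := sphere_subset_closedBall.trans hsubset
    rw [← tendstoLocallyUniformlyOn_iff_tendstoUniformlyOn_of_compact (isCompact_sphere c r)]
    exact tendstoLocallyUniformlyOn_dslope_of_notMem (hFf.mono hsR) (hfd.continuousOn.mono hsR)
      hw hFw fun h => (mem_ball.1 (hr (mem_insert w₀ K))).ne h
  rw [Metric.tendstoUniformlyOn_iff] at hsphere ⊢
  intro ε hε
  filter_upwards [hsphere (ε / 2) (half_pos hε), hw.eventually (isOpen_ball.mem_nhds hw₀)]
    with i hi hwi z hz
  have hdiff : DifferentiableOn ℂ (fun z => dslope f w₀ z - dslope (F i) (w i) z) (ball c R) :=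
    ((Complex.differentiableOn_dslope (isOpen_ball.mem_nhds hw₀)).2 hfd).sub
      ((Complex.differentiableOn_dslope (isOpen_ball.mem_nhds hwi)).2 (hFd i))
  rw [dist_eq_norm]
  refine (Complex.norm_le_of_forall_mem_frontier_norm_le isBounded_ball
    (hdiff.mono (closure_ball_subset_closedBall.trans hsubset)).diffContOnCl
    (fun ζ hζ => ?_) (subset_closure (hr (mem_insert_of_mem w₀ hz)))).trans_lt (half_lt_self hε)
  simpa [dist_eq_norm] using (hi ζ (frontier_ball_subset_sphere hζ)).le

theorem norm_coeff_le_of_norm_le_sphere {h : ℂ → ℂ} {a : ℕ → ℂ} {r C : ℝ} (hr : 0 < r)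
    (hh : DiffContOnCl ℂ h (ball 0 r)) (hC : ∀ z ∈ sphere (0 : ℂ) r, ‖h z‖ ≤ C)
    (ha : ∀ᶠ z in 𝓝 0, HasSum (fun n => a n * z ^ n) (h z)) (n : ℕ) : ‖a n‖ ≤ C / r ^ n := by
  have hseries : HasFPowerSeriesAt h (FormalMultilinearSeries.ofScalars ℂ a) 0 := by
    rw [hasFPowerSeriesAt_iff]
    simpa [FormalMultilinearSeries.coeff_ofScalars, mul_comm] using ha
  have hcoeff : a n = iteratedDeriv n h 0 / n.factorial := by
    have := hseries.eq_formalMultilinearSeries hseries.analyticAt.hasFPowerSeriesAt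
    simpa using congrArg (fun s => s.coeff n) this
  rw [hcoeff, norm_div, Complex.norm_natCast, div_le_iff₀ (by positivity)]
  calc ‖iteratedDeriv n h 0‖ ≤ n.factorial * C / r ^ n :=
        Complex.norm_iteratedDeriv_le_of_forall_mem_sphere_norm_le n hr hh hC
    _ = C / r ^ n * n.factorial := by ring

theorem norm_coeff_add_div_pow_le {g : ℂ → ℂ} {u : ℕ → ℂ} {w : ℂ} {r M : ℝ} (hw₀ : w ≠ 0)
    (hw : ‖w‖ < r) (hg : DifferentiableOn ℂ g (closedBall 0 r))
    (hM : ∀ z ∈ closedBall (0 : ℂ) r, ‖g z‖ ≤ M)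
    (hu : ∀ᶠ z in 𝓝 0, HasSum (fun n => u n * z ^ n) (g z / (z - w))) (n : ℕ) :
    ‖u n + g w / w ^ (n + 1)‖ ≤ 2 * M / (r - ‖w‖) / r ^ n := by
  have hr : 0 < r := (norm_nonneg w).trans_lt hw
  have hwmem : closedBall (0 : ℂ) r ∈ 𝓝 w :=
    mem_of_superset (isOpen_ball.mem_nhds (by simpa using hw)) ball_subset_closedBall
  refine norm_coeff_le_of_norm_le_sphere (h := dslope g w)
    (a := fun n => u n + g w / w ^ (n + 1)) hr ?_ ?_ ?_ n
  · exact (((Complex.differentiableOn_dslope hwmem).2 hg).mono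
      closure_ball_subset_closedBall).diffContOnCl
  · intro z hz
    have hzr : ‖z‖ = r := by simpa using hz
    have hne : z ≠ w := by rintro rfl; exact hw.ne hzr
    rw [dslope_of_ne _ hne, slope_def_field, norm_div]
    have hM₀ : ‖g z - g w‖ ≤ 2 * M := by
      have := norm_sub_le (g z) (g w)
      linarith [hM z (sphere_subset_closedBall hz), hM w (by simpa using hw.le)]
    have hdist : r - ‖w‖ ≤ ‖z - w‖ := hzr ▸ norm_sub_norm_le z w
    have := sub_pos.2 hw
    gcongr
    exact (norm_nonneg _).trans hM₀
  · filter_upwards [hu, isOpen_ball.mem_nhds (mem_ball_self (norm_pos_iff.2 hw₀))] with z hz hzw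
    have hzw' : ‖z / w‖ < 1 := by
      rw [norm_div, div_lt_one (norm_pos_iff.2 hw₀)]; simpa using hzw
    have hne : z ≠ w := by rintro rfl; simp at hzw
    have hgeom := (hasSum_geometric_of_norm_lt_one hzw').mul_left (g w / w)
    convert hz.add hgeom using 1
    · funext n
      rw [div_pow]
      field_simp
      ring
    · have h₁ : z - w ≠ 0 := sub_ne_zero.2 hne
      have h₂ : w - z ≠ 0 := sub_ne_zero.2 hne.symm
      rw [dslope_of_ne _ hne, slope_def_field]
      field_simp
      ring

theorem norm_coeff_inv_add_le {F : ℂ → ℂ} {u : ℕ → ℂ} {w : ℂ} {r m : ℝ} (hw₀ : w ≠ 0)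
    (hw : ‖w‖ < r) (hF : DifferentiableOn ℂ F (closedBall 0 r)) (hFw : F w = 0) (hm : 0 < m)
    (hle : ∀ z ∈ closedBall (0 : ℂ) r, m ≤ ‖dslope F w z‖)
    (hu : ∀ᶠ z in 𝓝 0, HasSum (fun n => u n * z ^ n) (F z)⁻¹) (n : ℕ) :
    ‖u n + (dslope F w w)⁻¹ / w ^ (n + 1)‖ ≤ 2 * m⁻¹ / (r - ‖w‖) / r ^ n := by
  have hwmem : closedBall (0 : ℂ) r ∈ 𝓝 w :=
    mem_of_superset (isOpen_ball.mem_nhds (by simpa using hw)) ball_subset_closedBall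
  refine norm_coeff_add_div_pow_le (g := fun z => (dslope F w z)⁻¹) hw₀ hw ?_ ?_ ?_ n
  · exact ((Complex.differentiableOn_dslope hwmem).2 hF).inv fun z hz =>
      norm_pos_iff.1 (hm.trans_le (hle z hz))
  · intro z hz
    rw [norm_inv]
    exact inv_anti₀ hm (hle z hz)
  · refine hu.mono fun z hz => ?_
    have hfactor : F z = (z - w) * dslope F w z := by
      rw [← smul_eq_mul, sub_smul_dslope, hFw, sub_zero]
    rwa [hfactor, mul_inv, mul_comm, ← div_eq_mul_inv] at hz

theorem exists_closedBall_ne_zero {f : ℂ → ℂ} {R : ℝ} (hR : 1 < R)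
    (hf : ContinuousOn f (ball 0 R)) (hne : ∀ z ∈ closedBall (0 : ℂ) 1, f z ≠ 0) :
    ∃ r, 1 < r ∧ r < R ∧ ∀ z ∈ closedBall (0 : ℂ) r, f z ≠ 0 := by
  have hopen : IsOpen (ball (0 : ℂ) R ∩ f ⁻¹' {0}ᶜ) :=
    hf.isOpen_inter_preimage isOpen_ball isOpen_compl_singleton
  obtain ⟨δ, hδ, hsub⟩ := (isCompact_closedBall (0 : ℂ) 1).exists_cthickening_subset_open hopen
    fun z hz => ⟨closedBall_subset_ball hR hz, hne z hz⟩
  rw [cthickening_closedBall hδ.le zero_le_one] at hsub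
  refine ⟨δ + 1, by linarith, ?_, fun z hz => (hsub hz).2⟩
  have hmem : ((δ + 1 : ℝ) : ℂ) ∈ closedBall (0 : ℂ) (δ + 1) := by
    rw [mem_closedBall_zero_iff, Complex.norm_real, Real.norm_of_nonneg (by positivity)]
  have := mem_ball_zero_iff.1 (hsub hmem).1
  rwa [Complex.norm_real, Real.norm_of_nonneg (by positivity)] at this

theorem exists_pos_eventually_le_norm {α : Type*} [TopologicalSpace α] {K : Set α}
    {G : ι → α → ℂ} {g : α → ℂ} (hK : IsCompact K) (hg : ContinuousOn g K)
    (hne : ∀ z ∈ K, g z ≠ 0) (hGg : TendstoUniformlyOn G g p K) :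
    ∃ m > 0, ∀ᶠ i in p, ∀ z ∈ K, m ≤ ‖G i z‖ := by
  rcases K.eq_empty_or_nonempty with rfl | hKne
  · exact ⟨1, one_pos, by simp⟩
  obtain ⟨z₀, hz₀, hmin⟩ := hK.exists_isMinOn hKne hg.norm
  have hpos : 0 < ‖g z₀‖ := norm_pos_iff.2 (hne z₀ hz₀)
  refine ⟨‖g z₀‖ / 2, half_pos hpos, ?_⟩
  filter_upwards [Metric.tendstoUniformlyOn_iff.1 hGg _ (half_pos hpos)] with i hi z hz
  have hd := hi z hz
  rw [dist_eq_norm] at hd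
  have h₁ : ‖g z₀‖ ≤ ‖g z‖ := hmin hz
  have h₂ : ‖g z‖ - ‖G i z‖ ≤ ‖g z - G i z‖ := norm_sub_norm_le _ _
  linarith

theorem tendsto_root_pow {F : ℕ → ℂ → ℂ} {w : ℕ → ℂ} {κ d : ℂ} (hd : d ≠ 0)
    (hw₀ : ∀ᶠ n in atTop, F n (w n) = 0)
    (hslope : Tendsto (fun n => dslope (F n) (w n) 1) atTop (𝓝 d))
    (hκ : Tendsto (fun n : ℕ => n * F n 1) atTop (𝓝 κ)) :
    Tendsto (fun n => w n ^ n) atTop (𝓝 (Complex.exp (-(κ / d)))) := by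
  have hroot : Tendsto (fun n : ℕ => n * (w n - 1)) atTop (𝓝 (-(κ / d))) := by
    refine (hκ.div hslope hd).neg.congr' ?_
    filter_upwards [hw₀, hslope.eventually_ne hd] with n hn hne
    have hF : F n 1 = (1 - w n) * dslope (F n) (w n) 1 := by
      have := sub_smul_dslope (F n) (w n) 1
      rw [hn, sub_zero, smul_eq_mul] at this
      exact this.symm
    simp only [Pi.div_apply]
    rw [hF]
    field_simp
    ring
  simpa using Complex.tendsto_one_add_pow_exp_of_tendsto hroot

theorem tendsto_pow_sub_add_one {w : ℕ → ℂ} {ℓ : ℂ} (hw : Tendsto w atTop (𝓝 1))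
    (hpow : Tendsto (fun n => w n ^ n) atTop (𝓝 ℓ)) (j : ℕ) :
    Tendsto (fun n => w n ^ (n - j + 1)) atTop (𝓝 ℓ) := by
  have hlim : Tendsto (fun n => w n ^ n * w n / w n ^ j) atTop (𝓝 (ℓ * 1 / 1 ^ j)) :=
    (hpow.mul hw).div (hw.pow j) (by simp)
  rw [one_pow, mul_one, div_one] at hlim
  refine hlim.congr' ?_
  filter_upwards [hw.eventually_ne one_ne_zero, eventually_ge_atTop j] with n hn hj
  rw [div_eq_iff (pow_ne_zero j hn), ← pow_succ, ← pow_add]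
  congr 1
  omega

theorem exists_radius_eventually_le_norm_dslope {F : ℕ → ℂ → ℂ} {f : ℂ → ℂ} {w : ℕ → ℂ} {R : ℝ}
    (hR : 1 < R) (hFf : TendstoLocallyUniformlyOn F f atTop (ball 0 R))
    (hFd : ∀ n, DifferentiableOn ℂ (F n) (ball 0 R)) (hf₁ : f 1 = 0) (hf' : deriv f 1 ≠ 0)
    (hne : ∀ z ∈ closedBall (0 : ℂ) 1, z ≠ 1 → f z ≠ 0) (hw : Tendsto w atTop (𝓝 1)) :
    ∃ r, 1 < r ∧ r < R ∧ ∃ m > 0, ∀ᶠ n in atTop, ∀ z ∈ closedBall (0 : ℂ) r,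
      m ≤ ‖dslope (F n) (w n) z‖ := by
  have h1R : (1 : ℂ) ∈ ball (0 : ℂ) R := by simpa using hR
  have hfd : DifferentiableOn ℂ f (ball 0 R) := hFf.differentiableOn (.of_forall hFd) isOpen_ball
  have hcont : ContinuousOn (dslope f 1) (ball 0 R) :=
    ((Complex.differentiableOn_dslope (isOpen_ball.mem_nhds h1R)).2 hfd).continuousOn
  have hgne : ∀ z ∈ closedBall (0 : ℂ) 1, dslope f 1 z ≠ 0 := by
    intro z hz
    rcases eq_or_ne z 1 with rfl | hz₁
    · rwa [dslope_same]
    · rw [dslope_of_ne _ hz₁, slope_def_field, hf₁, sub_zero]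
      exact div_ne_zero (hne z hz hz₁) (sub_ne_zero.2 hz₁)
  obtain ⟨r, hr, hrR, hrne⟩ := exists_closedBall_ne_zero hR hcont hgne
  have hunif : TendstoUniformlyOn (fun n => dslope (F n) (w n)) (dslope f 1) atTop
      (closedBall 0 r) :=
    (tendstoLocallyUniformlyOn_iff_forall_isCompact isOpen_ball).1
      (tendstoLocallyUniformlyOn_dslope hFf hFd hw h1R) _
      (closedBall_subset_ball hrR) (isCompact_closedBall 0 r)
  exact ⟨r, hr, hrR, exists_pos_eventually_le_norm (isCompact_closedBall 0 r)
    (hcont.mono (closedBall_subset_ball hrR)) hrne hunif⟩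

theorem tendsto_coeff_of_simple_root {F : ℕ → ℂ → ℂ} {f : ℂ → ℂ} {u : ℕ → ℕ → ℂ} {κ : ℂ} {R : ℝ}
    (hR : 1 < R) (hFf : TendstoLocallyUniformlyOn F f atTop (ball 0 R))
    (hFd : ∀ n, DifferentiableOn ℂ (F n) (ball 0 R)) (hf₁ : f 1 = 0) (hf' : deriv f 1 ≠ 0)
    (hne : ∀ z ∈ closedBall (0 : ℂ) 1, z ≠ 1 → f z ≠ 0)
    (hκ : Tendsto (fun n : ℕ => n * F n 1) atTop (𝓝 κ))
    (hu : ∀ n, ∀ᶠ z in 𝓝 0, HasSum (fun k => u n k * z ^ k) (F n z)⁻¹) (j : ℕ) :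
    Tendsto (fun n => u n (n - j)) atTop
      (𝓝 (-(Complex.exp (κ / deriv f 1) / deriv f 1))) := by
  have h1R : (1 : ℂ) ∈ ball (0 : ℂ) R := by simpa using hR
  have hfd : DifferentiableOn ℂ f (ball 0 R) := hFf.differentiableOn (.of_forall hFd) isOpen_ball
  obtain ⟨w, hw₁, hw₀⟩ := exists_tendsto_eventually_eq_zero isOpen_ball h1R hFf hFd hf₁ hf'
  have hGg := tendstoLocallyUniformlyOn_dslope hFf hFd hw₁ h1R
  have hpow : Tendsto (fun n => w n ^ (n - j + 1)) atTop (𝓝 (Complex.exp (-(κ / deriv f 1)))) :=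
    tendsto_pow_sub_add_one hw₁
      (tendsto_root_pow hf' hw₀ (dslope_same f 1 ▸ hGg.tendsto_at h1R) hκ) j
  have hderiv : Tendsto (fun n => dslope (F n) (w n) (w n)) atTop (𝓝 (deriv f 1)) :=
    dslope_same f 1 ▸ hGg.tendsto_comp
      (((Complex.differentiableOn_dslope (isOpen_ball.mem_nhds h1R)).2 hfd).continuousOn 1 h1R) h1R
      (by rwa [isOpen_ball.nhdsWithin_eq h1R])
  have hmain : Tendsto (fun n => (dslope (F n) (w n) (w n))⁻¹ / w n ^ (n - j + 1)) atTop
      (𝓝 (Complex.exp (κ / deriv f 1) / deriv f 1)) := by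
    have hlimit : Complex.exp (κ / deriv f 1) / deriv f 1 =
        (deriv f 1)⁻¹ / Complex.exp (-(κ / deriv f 1)) := by
      rw [Complex.exp_neg, div_inv_eq_mul, mul_comm, div_eq_mul_inv]
    rw [hlimit]
    exact (hderiv.inv₀ hf').div hpow (Complex.exp_ne_zero _)
  obtain ⟨r, hr, hrR, m, hm, hmle⟩ :=
    exists_radius_eventually_le_norm_dslope hR hFf hFd hf₁ hf' hne hw₁
  have hnorm : Tendsto (fun n => ‖w n‖) atTop (𝓝 1) := by simpa using hw₁.norm
  have hbound : Tendsto (fun n => 2 * m⁻¹ / (r - ‖w n‖) / r ^ (n - j)) atTop (𝓝 0) :=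
    (tendsto_const_nhds.div (hnorm.const_sub r) (sub_pos.2 hr).ne').div_atTop
      ((tendsto_pow_atTop_atTop_of_one_lt hr).comp (tendsto_sub_atTop_nat j))
  have herror : Tendsto
      (fun n => u n (n - j) + (dslope (F n) (w n) (w n))⁻¹ / w n ^ (n - j + 1)) atTop (𝓝 0) := by
    refine squeeze_zero_norm' ?_ hbound
    filter_upwards [hw₀, hmle, hw₁.eventually_ne one_ne_zero, hnorm.eventually_lt_const hr]
      with n hroot hle hne₀ hlt
    exact norm_coeff_inv_add_le hne₀ hlt ((hFd n).mono (closedBall_subset_ball hrR)) hroot hm hle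
      (hu n) (n - j)
  simpa using herror.sub hmain

end CoefficientAsymptotics

section RenewalSequences

open Metric Topology

/-- `u` is the renewal sequence driven by the step weights `a`: each `u n` sums, over all ways of
writing `n` as an ordered sum of positive steps, the product of the weights of these steps. The
weight `a 0` plays no role. -/
structure IsRenewalSeq (a u : ℕ → ℂ) : Prop where
  zero : u 0 = 1
  succ : ∀ n, u (n + 1) = ∑ k ∈ Finset.range (n + 1), a (k + 1) * u (n - k)

namespace IsRenewalSeq

variable {a u : ℕ → ℂ} {p : ℕ → ℝ}

theorem norm_le_one (h : IsRenewalSeq a u) (hap : ∀ n, ‖a n‖ ≤ p n) (hp : HasSum p 1) (n : ℕ) :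
    ‖u n‖ ≤ 1 := by
  have hp₀ : ∀ n, 0 ≤ p n := fun n => (norm_nonneg _).trans (hap n)
  induction n using Nat.strong_induction_on with
  | _ n ih =>
    rcases n with _ | n
    · simp [h.zero]
    calc ‖u (n + 1)‖ ≤ ∑ k ∈ Finset.range (n + 1), ‖a (k + 1) * u (n - k)‖ := by
          rw [h.succ]
          exact norm_sum_le _ _
      _ ≤ ∑ k ∈ Finset.range (n + 1), p (k + 1) := by
          gcongr with k
          rw [norm_mul]
          exact mul_le_of_le_one_right (norm_nonneg _) (ih _ (by omega)) |>.trans (hap _)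
      _ ≤ ∑ k ∈ Finset.range (n + 2), p k := by
          rw [Finset.sum_range_succ' p (n + 1)]
          exact le_add_of_nonneg_right (hp₀ 0)
      _ ≤ 1 := sum_le_hasSum _ (fun k _ => hp₀ k) hp

theorem mul_pow (h : IsRenewalSeq a u) (z : ℂ) :
    IsRenewalSeq (fun n => a n * z ^ n) fun n => u n * z ^ n where
  zero := by rw [h.zero, pow_zero, mul_one]
  succ n := by
    rw [h.succ, Finset.sum_mul]
    refine Finset.sum_congr rfl fun k hk => ?_
    have hkn : k ≤ n := Nat.lt_succ_iff.1 (Finset.mem_range.1 hk)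
    rw [show n + 1 = k + 1 + (n - k) by omega, pow_add z (k + 1) (n - k)]
    ring

theorem hasSum_inv (h : IsRenewalSeq a u) (ha₀ : a 0 = 0) {z : ℂ}
    (ha : Summable fun n => ‖a n * z ^ n‖) (hu : Summable fun n => ‖u n * z ^ n‖) :
    HasSum (fun n => u n * z ^ n) (1 - ∑' n, a n * z ^ n)⁻¹ := by
  have hterm : ∀ n, ∑ k ∈ Finset.range (n + 2), a k * z ^ k * (u (n + 1 - k) * z ^ (n + 1 - k)) =
      u (n + 1) * z ^ (n + 1) := by
    intro n
    rw [Finset.sum_range_succ', ha₀, h.succ, Finset.sum_mul]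
    simp only [zero_mul, add_zero]
    refine Finset.sum_congr rfl fun k hk => ?_
    have hkn : k ≤ n := Nat.lt_succ_iff.1 (Finset.mem_range.1 hk)
    rw [Nat.add_sub_add_right, show n + 1 = k + 1 + (n - k) by omega, pow_add z (k + 1) (n - k)]
    ring
  have hproduct : (∑' n, a n * z ^ n) * ∑' n, u n * z ^ n = (∑' n, u n * z ^ n) - 1 := by
    have hconv := (summable_norm_sum_mul_range_of_summable_norm ha hu).of_norm
    rw [tsum_mul_tsum_eq_tsum_sum_range_of_summable_norm ha hu, hconv.tsum_eq_zero_add,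
      hu.of_norm.tsum_eq_zero_add, tsum_congr hterm]
    simp [ha₀, h.zero]
  have hmul : (1 - ∑' n, a n * z ^ n) * ∑' n, u n * z ^ n = 1 := by
    rw [sub_mul, hproduct]
    ring
  rw [inv_eq_of_mul_eq_one_right hmul]
  exact hu.of_norm.hasSum

theorem eventually_hasSum_inv (h : IsRenewalSeq a u) (ha₀ : a 0 = 0) (hap : ∀ n, ‖a n‖ ≤ p n)
    (hp : HasSum p 1) :
    ∀ᶠ z in 𝓝 (0 : ℂ), HasSum (fun n => u n * z ^ n) (1 - ∑' n, a n * z ^ n)⁻¹ := by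
  filter_upwards [ball_mem_nhds (0 : ℂ) one_pos] with z hz
  have hz₁ : ‖z‖ < 1 := by simpa using hz
  have hgeom : Summable fun n => ‖z‖ ^ n := summable_geometric_of_lt_one (norm_nonneg z) hz₁
  refine h.hasSum_inv ha₀ (.of_nonneg_of_le (fun n => norm_nonneg _) (fun n => ?_) hp.summable)
    (.of_nonneg_of_le (fun n => norm_nonneg _) (fun n => ?_) hgeom)
  · rw [norm_mul, norm_pow]
    exact (mul_le_of_le_one_right (norm_nonneg _) (pow_le_one₀ (norm_nonneg z) hz₁.le)).trans
      (hap n)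
  · rw [norm_mul, norm_pow]
    exact mul_le_of_le_one_left (by positivity) (h.norm_le_one hap hp n)

end IsRenewalSeq

variable {p : ℕ → ℝ} {R : ℝ}

theorem norm_mul_pow_le_of_mem_ball {c : ℂ} {b : ℝ} (hc : ‖c‖ ≤ b) {z : ℂ} (hz : z ∈ ball 0 R)
    (n : ℕ) : ‖c * z ^ n‖ ≤ b * R ^ n := by
  have : ‖z‖ ≤ R := (mem_ball_zero_iff.1 hz).le
  rw [norm_mul, norm_pow]
  have := (norm_nonneg c).trans hc
  gcongr

theorem differentiableOn_tsum_mul_pow {a : ℕ → ℂ} (hap : ∀ n, ‖a n‖ ≤ p n)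
    (hpR : Summable fun n => p n * R ^ n) :
    DifferentiableOn ℂ (fun z => ∑' n, a n * z ^ n) (ball 0 R) :=
  Complex.differentiableOn_tsum_of_summable_norm hpR (fun n => by fun_prop) isOpen_ball
    fun n _ hz => norm_mul_pow_le_of_mem_ball (hap n) hz n

theorem tendstoLocallyUniformlyOn_tsum_mul_pow {ι : Type*} {l : Filter ι} {a : ι → ℕ → ℂ}
    {b : ℕ → ℂ} (hR : 0 ≤ R) (hap : ∀ i n, ‖a i n‖ ≤ p n) (hbp : ∀ n, ‖b n‖ ≤ p n)
    (hpR : Summable fun n => p n * R ^ n) (hab : ∀ n, Tendsto (fun i => a i n) l (𝓝 (b n))) :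
    TendstoLocallyUniformlyOn (fun i z => ∑' n, a i n * z ^ n) (fun z => ∑' n, b n * z ^ n) l
      (ball 0 R) := by
  have hdiff : ∀ i n, ‖b n - a i n‖ * R ^ n ≤ 2 * (p n * R ^ n) := fun i n => by
    have := (norm_sub_le (b n) (a i n)).trans (add_le_add (hbp n) (hap i n))
    rw [← mul_assoc, two_mul]
    gcongr
  have hsummable : ∀ i, Summable fun n => ‖b n - a i n‖ * R ^ n := fun i =>
    .of_nonneg_of_le (fun n => by positivity) (hdiff i) (hpR.mul_left 2)
  have hzero : Tendsto (fun i => ∑' n, ‖b n - a i n‖ * R ^ n) l (𝓝 0) := by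
    have hterm : ∀ n, Tendsto (fun i => ‖b n - a i n‖ * R ^ n) l (𝓝 0) := fun n => by
      simpa using ((hab n).const_sub (b n)).norm.mul_const (R ^ n)
    simpa using tendsto_tsum_of_dominated_convergence (hpR.mul_left 2) hterm
      (.of_forall fun i n => by
        rw [Real.norm_of_nonneg (by positivity)]
        exact hdiff i n)
  refine TendstoUniformlyOn.tendstoLocallyUniformlyOn ?_
  rw [Metric.tendstoUniformlyOn_iff]
  intro ε hε
  filter_upwards [hzero.eventually_lt_const hε] with i hi z hz
  have hsum : ∀ {c : ℕ → ℂ}, (∀ n, ‖c n‖ ≤ p n) → Summable fun n => c n * z ^ n := fun hc =>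
    .of_norm_bounded hpR fun n => norm_mul_pow_le_of_mem_ball (hc n) hz n
  rw [dist_eq_norm, ← (hsum hbp).tsum_sub (hsum (hap i))]
  refine (tsum_of_norm_bounded (hsummable i).hasSum fun n => ?_).trans_lt hi
  rw [← sub_mul]
  exact norm_mul_pow_le_of_mem_ball le_rfl hz n

theorem deriv_tsum_mul_pow_one (hR : 1 < R) (hp : ∀ n, 0 ≤ p n)
    (hpR : Summable fun n => p n * R ^ n) :
    deriv (fun z : ℂ => ∑' n, (p n : ℂ) * z ^ n) 1 = ((∑' n, n * p n : ℝ) : ℂ) := by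
  have hnorm : ∀ n, ‖(p n : ℂ)‖ ≤ p n := fun n => by
    rw [Complex.norm_real, Real.norm_of_nonneg (hp n)]
  rw [← (Complex.hasSum_deriv_of_summable_norm (F := fun n (z : ℂ) => (p n : ℂ) * z ^ n) hpR
    (fun n => by fun_prop) isOpen_ball
    (fun n _ hz => norm_mul_pow_le_of_mem_ball (hnorm n) hz n)
    (show (1 : ℂ) ∈ ball 0 R by simpa using hR)).tsum_eq, Complex.ofReal_tsum]
  refine tsum_congr fun n => ?_
  simp [mul_comm]

theorem one_sub_tsum_mul_pow_ne_zero (hp : ∀ n, 0 ≤ p n) (hsum : HasSum p 1) (hp₁ : p 1 ≠ 0)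
    {z : ℂ} (hz : z ∈ closedBall 0 1) (hz₁ : z ≠ 1) : 1 - ∑' n, (p n : ℂ) * z ^ n ≠ 0 := by
  intro hzero
  have hzn : ‖z‖ ≤ 1 := by simpa using hz
  have hpow : ∀ n, (z ^ n).re ≤ 1 := fun n =>
    (Complex.re_le_norm _).trans (by rw [norm_pow]; exact pow_le_one₀ (norm_nonneg z) hzn)
  have hsummable : Summable fun n => (p n : ℂ) * z ^ n := by
    refine .of_norm_bounded hsum.summable fun n => ?_
    rw [norm_mul, norm_pow, Complex.norm_real, Real.norm_of_nonneg (hp n)]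
    exact mul_le_of_le_one_right (hp n) (pow_le_one₀ (norm_nonneg z) hzn)
  have hre : HasSum (fun n => p n * (1 - (z ^ n).re)) 0 := by
    have := hsum.sub (Complex.hasSum_re hsummable.hasSum)
    rw [← sub_eq_zero.1 hzero, Complex.one_re, sub_self] at this
    simpa [mul_sub] using this
  have hvanish := (hasSum_zero_iff_of_nonneg fun n =>
    mul_nonneg (hp n) (sub_nonneg.2 (hpow n))).1 hre
  have hre₁ : z.re = 1 := by
    have : p 1 * (1 - (z ^ 1).re) = 0 := congrFun hvanish 1
    rw [pow_one] at this
    linarith [(mul_eq_zero.1 this).resolve_left hp₁]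
  have him : z.im = 0 := by
    have := Complex.sq_norm z
    rw [Complex.normSq_apply, hre₁] at this
    nlinarith [norm_nonneg z]
  exact hz₁ (Complex.ext (by simpa using hre₁) (by simpa using him))

end RenewalSequences

section RenewalLimits

open Topology

variable {p : ℕ → ℝ} {R : ℝ} {a u : ℕ → ℕ → ℂ} {κ : ℝ}

theorem tsum_nat_mul_pos (hp₀ : p 0 = 0) (hp : ∀ n, 0 ≤ p n) (hsum : HasSum p 1)
    (hmean : Summable fun n => n * p n) : 0 < ∑' n : ℕ, n * p n := by
  have hle : ∀ n : ℕ, p n ≤ n * p n := by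
    rintro (_ | n)
    · simp [hp₀]
    · exact le_mul_of_one_le_left (hp _) (by simp)
  calc (0 : ℝ) < ∑' n, p n := by simp [hsum.tsum_eq]
    _ ≤ ∑' n : ℕ, n * p n := hsum.summable.tsum_le_tsum hle hmean

theorem natCast_le_mul_pow (hR : 1 < R) (n : ℕ) : (n : ℝ) ≤ (R - 1)⁻¹ * R ^ n := by
  rw [inv_mul_eq_div, le_div_iff₀ (by linarith)]
  linarith [one_add_mul_sub_le_pow (by linarith : -1 ≤ R) n]

theorem summable_nat_mul_of_summable_mul_pow (hR : 1 < R) (hp : ∀ n, 0 ≤ p n)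
    (hpR : Summable fun n => p n * R ^ n) : Summable fun n : ℕ => n * p n := by
  refine .of_nonneg_of_le (fun n => mul_nonneg n.cast_nonneg (hp n)) (fun n => ?_)
    (hpR.mul_left (R - 1)⁻¹)
  calc n * p n ≤ (R - 1)⁻¹ * R ^ n * p n :=
        mul_le_mul_of_nonneg_right (natCast_le_mul_pow hR n) (hp n)
    _ = (R - 1)⁻¹ * (p n * R ^ n) := by ring

theorem tendsto_renewalSeq (hp₀ : p 0 = 0) (hp : ∀ n, 0 ≤ p n) (hsum : HasSum p 1)
    (hp₁ : p 1 ≠ 0) (hR : 1 < R) (hpR : Summable fun n => p n * R ^ n)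
    (hap : ∀ L n, ‖a L n‖ ≤ p n) (hlim : ∀ n, Tendsto (a · n) atTop (𝓝 (p n)))
    (hκ : Tendsto (fun L : ℕ => L * (1 - ∑' n, a L n)) atTop (𝓝 (κ : ℂ)))
    (hu : ∀ L, IsRenewalSeq (a L) (u L)) (j : ℕ) :
    Tendsto (fun L => u L (L - j)) atTop
      (𝓝 (Real.exp (-κ / ∑' n, n * p n) / ∑' n, n * p n : ℝ)) := by
  have hnorm : ∀ n, ‖(p n : ℂ)‖ ≤ p n := fun n => by
    rw [Complex.norm_real, Real.norm_of_nonneg (hp n)]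
  have hmean := tsum_nat_mul_pos hp₀ hp hsum (summable_nat_mul_of_summable_mul_pow hR hp hpR)
  set μ := ∑' n, n * p n
  have hderiv : deriv (fun z : ℂ => 1 - ∑' n, (p n : ℂ) * z ^ n) 1 = -(μ : ℂ) := by
    rw [deriv_const_sub, deriv_tsum_mul_pow_one hR hp hpR]
  have hsum₁ : ∑' n, (p n : ℂ) = 1 := by
    rw [← Complex.ofReal_tsum, hsum.tsum_eq, Complex.ofReal_one]
  have ha₀ : ∀ L, a L 0 = 0 := fun L => norm_le_zero_iff.1 (hp₀ ▸ hap L 0)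
  have huniform : TendstoLocallyUniformlyOn (fun L z => 1 - ∑' n, a L n * z ^ n)
      (fun z => 1 - ∑' n, (p n : ℂ) * z ^ n) atTop (Metric.ball 0 R) :=
    (uniformContinuous_const.sub uniformContinuous_id).comp_tendstoLocallyUniformlyOn
      (tendstoLocallyUniformlyOn_tsum_mul_pow (by linarith) hap hnorm hpR hlim)
  have := tendsto_coeff_of_simple_root hR huniform
    (fun L => (differentiableOn_tsum_mul_pow (hap L) hpR).const_sub 1)
    (by simp [hsum₁]) (by rw [hderiv]; simpa using hmean.ne')
    (fun z hz hz₁ => one_sub_tsum_mul_pow_ne_zero hp hsum hp₁ hz hz₁)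
    (by simpa using hκ) (fun L => (hu L).eventually_hasSum_inv (ha₀ L) (hap L) hsum) j
  rw [hderiv, div_neg, div_neg, neg_neg, ← neg_div] at this
  exact_mod_cast this

theorem tendsto_sum_mul_renewalSeq {b : ℕ → ℕ → ℂ} {β : ℕ → ℂ} {ℓ : ℂ} {q : ℕ → ℝ}
    (hsum : HasSum p 1) (hap : ∀ L n, ‖a L n‖ ≤ p n) (hu : ∀ L, IsRenewalSeq (a L) (u L))
    (hlim : ∀ j, Tendsto (fun L => u L (L - j)) atTop (𝓝 ℓ)) (hbq : ∀ L n, ‖b L n‖ ≤ q n)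
    (hq : Summable q) (hbβ : ∀ n, Tendsto (b · n) atTop (𝓝 (β n))) :
    Tendsto (fun L => ∑ k ∈ Finset.range (L + 1), b L k * u L (L - k)) atTop
      (𝓝 ((∑' k, β k) * ℓ)) := by
  have htsum : ∀ L, ∑ k ∈ Finset.range (L + 1), b L k * u L (L - k) =
      ∑' k, if k ≤ L then b L k * u L (L - k) else 0 := fun L => by
    rw [tsum_eq_sum (s := Finset.range (L + 1)) fun k hk => if_neg (by simpa using hk)]
    exact Finset.sum_congr rfl fun k hk => (if_pos (by simpa [Nat.lt_succ_iff] using hk)).symm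
  simp only [htsum, ← tsum_mul_right]
  refine tendsto_tsum_of_dominated_convergence hq (fun k => ?_) (.of_forall fun L k => ?_)
  · refine ((hbβ k).mul (hlim k)).congr' ?_
    filter_upwards [eventually_ge_atTop k] with L hL
    rw [if_pos hL]
  · split_ifs
    · rw [norm_mul]
      exact (mul_le_of_le_one_right (norm_nonneg _) ((hu L).norm_le_one (hap L) hsum _)).trans
        (hbq L k)
    · simpa using (norm_nonneg _).trans (hbq L k)

end RenewalLimits

section CharacteristicFunction

open ProbabilityTheory Topology

variable {Ω : Type*} [MeasurableSpace Ω] {P : Measure Ω} {X : Ω → ℝ}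

theorem tendsto_mul_one_sub_charFun [IsProbabilityMeasure P] (hX : MemLp X 2 P) (hX₀ : P[X] = 0) :
    Tendsto (fun L : ℕ => (L : ℂ) * (1 - charFun (P.map X) (√L)⁻¹)) atTop
      (𝓝 ((P[X ^ 2] / 2 : ℝ) : ℂ)) := by
  have hmeas : AEMeasurable X P := hX.aestronglyMeasurable.aemeasurable
  have hint : MemLp id 2 (P.map X) := by
    rwa [memLp_map_measure_iff (by fun_prop) hmeas, Function.id_comp]
  have := Measure.isProbabilityMeasure_map hmeas
  have htaylor : (fun t => charFun (P.map X) t - (1 - (P[X ^ 2] : ℝ) * t ^ 2 / 2)) =o[𝓝 0]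
      fun t : ℝ => t ^ 2 := by
    have := taylor_isLittleO_univ (n := 2) (x₀ := 0) (contDiff_charFun (n := 2) hint)
    simpa only [taylorWithinEval_charFun_two_zero hmeas hint, hX₀, Complex.ofReal_zero, zero_mul,
      add_zero, sub_zero] using this
  have hsqrt : Tendsto (fun L : ℕ => (√L)⁻¹) atTop (𝓝 0) :=
    tendsto_inv_atTop_zero.comp (Real.tendsto_sqrt_atTop.comp tendsto_natCast_atTop_atTop)
  have hzero := (htaylor.comp_tendsto hsqrt).tendsto_inv_smul_nhds_zero
  have := hzero.const_sub ((P[X ^ 2] / 2 : ℝ) : ℂ)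
  rw [sub_zero] at this
  refine this.congr' ?_
  filter_upwards [eventually_gt_atTop 0] with L hL
  have hsq : ((√L)⁻¹) ^ 2 = (L : ℝ)⁻¹ := by rw [inv_pow, Real.sq_sqrt L.cast_nonneg]
  have hsq' : ((√L : ℝ) : ℂ)⁻¹ ^ 2 = (L : ℂ)⁻¹ := by
    rw [← Complex.ofReal_inv, ← Complex.ofReal_pow, hsq, Complex.ofReal_inv,
      Complex.ofReal_natCast]
  have hL₀ : (L : ℂ) ≠ 0 := by exact_mod_cast hL.ne'
  simp only [Function.comp_apply, hsq, inv_inv, Complex.real_smul, Complex.ofReal_natCast,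
    Complex.ofReal_inv, hsq', Complex.ofReal_div, Complex.ofReal_ofNat]
  field_simp
  ring

end CharacteristicFunction

section RenewalReward

open ProbabilityTheory Topology

variable {Ω : Type*} [MeasurableSpace Ω] {P : Measure Ω} {τ : Ω → ℕ} {X : Ω → ℝ}

/-- The part of the characteristic function of `X` at `t` carried by the event `τ = n`: when `τ`
is the duration of a random step and `X` its reward, these are the weights of the renewal sequence
whose value at `n` is the characteristic function of the total reward on the event that `n` is a
renewal time. -/
noncomputable def stepTransform (P : Measure Ω) (τ : Ω → ℕ) (X : Ω → ℝ) (t : ℝ) (n : ℕ) : ℂ :=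
  ∫ ω in τ ⁻¹' {n}, Complex.exp (t * X ω * Complex.I) ∂P

theorem norm_cexp_mul_mul_I (t x : ℝ) : ‖Complex.exp (t * x * Complex.I)‖ = 1 := by
  rw [← Complex.ofReal_mul, Complex.norm_exp_ofReal_mul_I]

theorem norm_stepTransform_le [IsFiniteMeasure P] (t : ℝ) (n : ℕ) :
    ‖stepTransform P τ X t n‖ ≤ P.real (τ ⁻¹' {n}) := by
  simpa [stepTransform] using norm_setIntegral_le_of_norm_le_const (measure_lt_top P _)
    fun ω _ => (norm_cexp_mul_mul_I t (X ω)).le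

theorem hasSum_setIntegral_fiber {E : Type*} [NormedAddCommGroup E] [NormedSpace ℝ E] {f : Ω → E}
    (hτ : Measurable τ) (hf : Integrable f P) :
    HasSum (fun n => ∫ ω in τ ⁻¹' {n}, f ω ∂P) (∫ ω, f ω ∂P) := by
  have huniv : ⋃ n, τ ⁻¹' {n} = univ := by
    rw [← preimage_iUnion, iUnion_of_singleton, preimage_univ]
  have := hasSum_integral_iUnion (fun n => hτ (measurableSet_singleton n))
    (pairwise_disjoint_fiber τ) hf.integrableOn
  rwa [huniv, setIntegral_univ] at this

theorem hasSum_fiber_mul [IsFiniteMeasure P] (hτ : Measurable τ) {g : ℕ → ℝ}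
    (hg : Integrable (fun ω => g (τ ω)) P) :
    HasSum (fun n => g n * P.real (τ ⁻¹' {n})) (∫ ω, g (τ ω) ∂P) := by
  have hfiber : ∀ n, ∫ ω in τ ⁻¹' {n}, g (τ ω) ∂P = g n * P.real (τ ⁻¹' {n}) := fun n => by
    rw [setIntegral_congr_fun (g := fun _ => g n) (hτ (measurableSet_singleton n))
      fun ω hω => congrArg g hω, setIntegral_const, smul_eq_mul, mul_comm]
  simpa only [hfiber] using hasSum_setIntegral_fiber hτ hg

theorem integrable_comp_of_summable_fiber [IsFiniteMeasure P] (hτ : Measurable τ) {g : ℕ → ℝ}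
    (hg : Summable fun n => ‖g n‖ * P.real (τ ⁻¹' {n})) : Integrable (fun ω => g (τ ω)) P := by
  have hmeas (n : ℕ) : MeasurableSet (τ ⁻¹' {n}) := hτ (measurableSet_singleton n)
  have hconst (n : ℕ) : EqOn (fun ω => g (τ ω)) (fun _ => g n) (τ ⁻¹' {n}) :=
    fun ω (hω : τ ω = n) => congrArg g hω
  have hnorm (n : ℕ) : ∫ ω in τ ⁻¹' {n}, ‖g (τ ω)‖ ∂P = ‖g n‖ * P.real (τ ⁻¹' {n}) := by
    rw [setIntegral_congr_fun (hmeas n) fun ω hω => congrArg norm (hconst n hω)]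
    simp [mul_comm]
  rw [← integrableOn_univ, ← preimage_univ (f := τ), ← iUnion_of_singleton, preimage_iUnion]
  refine integrableOn_iUnion_of_summable_integral_norm (fun n => ?_) (by simpa only [hnorm])
  exact (integrableOn_congr_fun (hconst n) (hmeas n)).2 (integrableOn_const (by finiteness))

theorem hasSum_measureReal_fiber [IsFiniteMeasure P] (hτ : Measurable τ) :
    HasSum (fun n => P.real (τ ⁻¹' {n})) (P.real univ) := by
  simpa using hasSum_fiber_mul (P := P) (g := fun _ => 1) hτ (integrable_const 1)

theorem hasSum_stepTransform [IsFiniteMeasure P] (hτ : Measurable τ) (hX : AEMeasurable X P)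
    (t : ℝ) : HasSum (stepTransform P τ X t) (charFun (P.map X) t) := by
  have hint : Integrable (fun ω => Complex.exp (t * X ω * Complex.I)) P :=
    .of_bound (by fun_prop) 1 (.of_forall fun ω => (norm_cexp_mul_mul_I t (X ω)).le)
  rw [charFun_apply_real, integral_map hX (by fun_prop)]
  exact hasSum_setIntegral_fiber hτ hint

theorem tendsto_stepTransform [IsFiniteMeasure P] (hX : AEMeasurable X P) {ι : Type*}
    {l : Filter ι} [l.IsCountablyGenerated] {t : ι → ℝ} (ht : Tendsto t l (𝓝 0)) (n : ℕ) :
    Tendsto (fun i => stepTransform P τ X (t i) n) l (𝓝 (P.real (τ ⁻¹' {n}) : ℂ)) := by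
  have hone : (P.real (τ ⁻¹' {n}) : ℂ) = ∫ ω in τ ⁻¹' {n}, 1 ∂P := by simp
  rw [hone]
  refine tendsto_integral_filter_of_dominated_convergence (fun _ => 1)
    (.of_forall fun i => ?_) (.of_forall fun i => .of_forall fun ω =>
      (norm_cexp_mul_mul_I (t i) (X ω)).le) (integrable_const _) (.of_forall fun ω => ?_)
  · have := hX.restrict (s := τ ⁻¹' {n})
    fun_prop
  · have hcont : Continuous fun s : ℝ => Complex.exp (s * X ω * Complex.I) := by fun_prop
    simpa [Function.comp_def] using (hcont.tendsto 0).comp ht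

theorem memLp_two_of_integrable_pow {R : ℝ} (hτ : Measurable τ) (hR : 1 < R)
    (hτR : Integrable (fun ω => R ^ τ ω) P) : MemLp (fun ω => (τ ω : ℝ)) 2 P := by
  have hsqrt : 1 < √R := Real.lt_sqrt_of_sq_lt (by simpa using hR)
  rw [memLp_two_iff_integrable_sq (by fun_prop)]
  refine (hτR.const_mul ((√R - 1)⁻¹ ^ 2)).mono' (by fun_prop) (.of_forall fun ω => ?_)
  calc ‖(τ ω : ℝ) ^ 2‖ = (τ ω : ℝ) ^ 2 := Real.norm_of_nonneg (sq_nonneg _)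
    _ ≤ ((√R - 1)⁻¹ * √R ^ τ ω) ^ 2 := by
      gcongr
      exact natCast_le_mul_pow hsqrt _
    _ = (√R - 1)⁻¹ ^ 2 * R ^ τ ω := by
      rw [mul_pow, pow_right_comm, Real.sq_sqrt (by linarith)]

theorem tendsto_sum_stepTransform_mul_renewalSeq [IsProbabilityMeasure P] (hτ : Measurable τ)
    (hτ₀ : P.real (τ ⁻¹' {0}) = 0) (hτ₁ : P.real (τ ⁻¹' {1}) ≠ 0) {R : ℝ} (hR : 1 < R)
    (hτR : Integrable (fun ω => R ^ τ ω) P) (hX : MemLp X 2 P) (hX₀ : P[X] = 0) (B : Set Ω)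
    {u : ℕ → ℕ → ℂ} (hu : ∀ L : ℕ, IsRenewalSeq (stepTransform P τ X (√L)⁻¹) (u L)) :
    Tendsto (fun L : ℕ => ∑ k ∈ Finset.range (L + 1),
        stepTransform (P.restrict B) τ X (√L)⁻¹ k * u L (L - k)) atTop
      (𝓝 (P.real B * (Real.exp (-(P[X ^ 2] / 2) / P[fun ω => (τ ω : ℝ)]) /
        P[fun ω => (τ ω : ℝ)] : ℝ))) := by
  have hmeas : AEMeasurable X P := hX.aestronglyMeasurable.aemeasurable
  have hsqrt : Tendsto (fun L : ℕ => (√L)⁻¹) atTop (𝓝 0) :=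
    tendsto_inv_atTop_zero.comp (Real.tendsto_sqrt_atTop.comp tendsto_natCast_atTop_atTop)
  have hsum : HasSum (fun n => P.real (τ ⁻¹' {n})) 1 := by
    simpa only [probReal_univ] using hasSum_measureReal_fiber (P := P) hτ
  have hpR : Summable fun n => P.real (τ ⁻¹' {n}) * R ^ n := by
    simpa only [mul_comm] using (hasSum_fiber_mul hτ hτR).summable
  have hp : ∀ n, 0 ≤ P.real (τ ⁻¹' {n}) := fun n => measureReal_nonneg
  have hmean : P[fun ω => (τ ω : ℝ)] = ∑' n, n * P.real (τ ⁻¹' {n}) := by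
    have hτint : Integrable (fun ω => (τ ω : ℝ)) P :=
      (memLp_two_of_integrable_pow hτ hR hτR).integrable one_le_two
    exact (hasSum_fiber_mul hτ hτint).tsum_eq.symm
  have hκ : Tendsto (fun L : ℕ => (L : ℂ) * (1 - ∑' n, stepTransform P τ X (√L)⁻¹ n)) atTop
      (𝓝 ((P[X ^ 2] / 2 : ℝ) : ℂ)) := by
    simpa only [(hasSum_stepTransform hτ hmeas _).tsum_eq] using tendsto_mul_one_sub_charFun hX hX₀
  have hB : ∑' n, ((P.restrict B).real (τ ⁻¹' {n}) : ℂ) = P.real B := by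
    rw [← Complex.ofReal_tsum, (hasSum_measureReal_fiber hτ).tsum_eq,
      measureReal_restrict_apply_univ]
  rw [hmean, ← hB]
  exact tendsto_sum_mul_renewalSeq hsum (fun L => norm_stepTransform_le _) hu
    (tendsto_renewalSeq hτ₀ hp hsum hτ₁ hR hpR (fun L => norm_stepTransform_le _)
      (tendsto_stepTransform hmeas hsqrt) hκ hu)
    (fun L => norm_stepTransform_le _)
    (hasSum_measureReal_fiber hτ).summable
    (tendsto_stepTransform hmeas.restrict hsqrt)

end RenewalReward

section GaussianDensity

open ProbabilityTheory Module Topology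
open scoped RealInnerProductSpace MatrixOrder

section StandardGaussian

variable {V : Type*} [NormedAddCommGroup V] [InnerProductSpace ℝ V] [FiniteDimensional ℝ V]
  [MeasurableSpace V] [BorelSpace V]

theorem integral_exp_neg_sq_norm_div_two_mul_cexp (w : V) :
    ∫ v : V, (Real.exp (-‖v‖ ^ 2 / 2) : ℂ) * Complex.exp (⟪v, w⟫ * Complex.I) =
      (√(2 * Real.pi) : ℂ) ^ finrank ℝ V * Complex.exp (-‖w‖ ^ 2 / 2) := by
  have hpi : (2 * Real.pi : ℂ) ^ (finrank ℝ V / 2 : ℂ) = (√(2 * Real.pi) : ℂ) ^ finrank ℝ V := by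
    rw [Real.sqrt_eq_rpow, Complex.ofReal_cpow (by positivity), ← Complex.cpow_nat_mul]
    push_cast
    congr 1
    field_simp
  convert GaussianFourier.integral_cexp_neg_mul_sq_norm_add (V := V) (b := 1 / 2) (by norm_num)
    Complex.I w using 2
  · ext v
    rw [Complex.ofReal_exp, ← Complex.exp_add, real_inner_comm]
    push_cast
    congr 1
    ring
  · rw [← hpi]
    congr 1
    ring
  · rw [Complex.I_sq]
    congr 1
    ring

theorem integrable_exp_neg_sq_norm_div_two : Integrable fun v : V => Real.exp (-‖v‖ ^ 2 / 2) := by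
  have := (GaussianFourier.integrable_cexp_neg_mul_sq_norm_add (V := V) (b := 1 / 2) (by norm_num)
    0 0).norm
  refine this.congr (.of_forall fun v => ?_)
  have hexponent : -(1 / 2) * (‖v‖ : ℂ) ^ 2 + 0 * (⟪(0 : V), v⟫ : ℝ) =
      ((-‖v‖ ^ 2 / 2 : ℝ) : ℂ) := by
    push_cast
    ring
  simp only [hexponent, Complex.norm_exp, Complex.ofReal_re]

theorem stdGaussian_eq_withDensity :
    stdGaussian V = volume.withDensity fun v =>
      ENNReal.ofReal ((√(2 * Real.pi) ^ finrank ℝ V)⁻¹ * Real.exp (-‖v‖ ^ 2 / 2)) := by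
  have := isFiniteMeasure_withDensity_ofReal
    (integrable_exp_neg_sq_norm_div_two (V := V) |>.const_mul (√(2 * Real.pi) ^ finrank ℝ V)⁻¹).2
  refine Measure.ext_of_charFun (funext fun w => ?_)
  rw [charFun_stdGaussian, charFun_apply, integral_withDensity_eq_integral_toReal_smul (by fun_prop)
    (.of_forall fun _ => ENNReal.ofReal_lt_top)]
  have hdensity : ∀ v : V, 0 ≤ (√(2 * Real.pi) ^ finrank ℝ V)⁻¹ * Real.exp (-‖v‖ ^ 2 / 2) :=
    fun v => by positivity
  have hpi : (√(2 * Real.pi) : ℂ) ^ finrank ℝ V ≠ 0 := by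
    exact_mod_cast (by positivity : √(2 * Real.pi) ^ finrank ℝ V ≠ 0)
  simp only [ENNReal.toReal_ofReal (hdensity _), mul_smul, integral_smul]
  simp only [Complex.real_smul, integral_exp_neg_sq_norm_div_two_mul_cexp]
  push_cast
  rw [inv_mul_cancel_left₀ hpi]

end StandardGaussian

variable {ι : Type*} [Fintype ι] [DecidableEq ι]

theorem toEuclideanCLM_inv_apply_apply {A : Matrix ι ι ℝ} (hA : IsUnit A.det)
    (x : EuclideanSpace ℝ ι) :
    toEuclideanCLM (𝕜 := ℝ) A⁻¹ (toEuclideanCLM (𝕜 := ℝ) A x) = x := by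
  rw [← mul_apply_eq_comp, ← map_mul, nonsing_inv_mul _ hA, map_one,
    one_apply_eq_self]

theorem integral_comp_toEuclideanCLM {F : Type*} [NormedAddCommGroup F] [NormedSpace ℝ F]
    {A : Matrix ι ι ℝ} (hA : IsUnit A.det) (f : EuclideanSpace ℝ ι → F) :
    ∫ x, f (toEuclideanCLM (𝕜 := ℝ) A x) = |A.det|⁻¹ • ∫ x, f x := by
  have hembedding : MeasurableEmbedding (toEuclideanCLM (𝕜 := ℝ) A) :=
    (toEuclideanCLM (𝕜 := ℝ) A).continuous.measurableEmbedding
      (Function.LeftInverse.injective (toEuclideanCLM_inv_apply_apply hA))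
  have hdet : LinearMap.det (toEuclideanCLM (𝕜 := ℝ) A : EuclideanSpace ℝ ι →ₗ[ℝ] _) = A.det := by
    rw [coe_toEuclideanCLM_eq_toEuclideanLin, LinearMap.det_toLpLin]
  have hmap := Measure.map_linearMap_addHaar_eq_smul_addHaar
    (volume : Measure (EuclideanSpace ℝ ι)) (hdet.trans_ne hA.ne_zero)
  rw [hdet, ContinuousLinearMap.coe_coe] at hmap
  rw [← hembedding.integral_map, hmap, integral_smul_measure, abs_inv,
    ENNReal.toReal_ofReal (by positivity)]

theorem sq_norm_toEuclideanCLM_inv_sqrt {S : Matrix ι ι ℝ} (hS : S.PosDef)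
    (x : EuclideanSpace ℝ ι) :
    ‖toEuclideanCLM (𝕜 := ℝ) (CFC.sqrt S)⁻¹ x‖ ^ 2 = x ⬝ᵥ (S⁻¹ *ᵥ x) := by
  have hS₀ : 0 ≤ S := hS.posSemidef.nonneg
  have hsymm : (CFC.sqrt S)⁻¹ᵀ = (CFC.sqrt S)⁻¹ :=
    (nonneg_iff_posSemidef.1 (CFC.sqrt_nonneg S)).isHermitian.inv.eq
  have hinv : S⁻¹ = (CFC.sqrt S)⁻¹ * (CFC.sqrt S)⁻¹ := by
    rw [← Matrix.mul_inv_rev, CFC.sqrt_mul_sqrt_self S hS₀]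
  rw [EuclideanSpace.real_norm_sq_eq, hinv, ← mulVec_mulVec, dotProduct_mulVec, ← mulVec_transpose,
    hsymm]
  simp [dotProduct, sq]

theorem integral_multivariateGaussian_zero {F : Type*} [NormedAddCommGroup F] [NormedSpace ℝ F]
    {S : Matrix ι ι ℝ} (hS : S.PosDef) (f : EuclideanSpace ℝ ι → F) :
    ∫ x, f x ∂multivariateGaussian 0 S =
      ∫ x : EuclideanSpace ℝ ι, ((√(2 * Real.pi) ^ Fintype.card ι * √S.det)⁻¹ *
        Real.exp (-(x ⬝ᵥ (S⁻¹ *ᵥ x)) / 2)) • f x := by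
  set A := CFC.sqrt S
  have hdet : A.det = √S.det := by
    rw [hS.posSemidef.det_sqrt, RCLike.sqrt_real]
  have hpos : 0 < A.det := by
    rw [hdet]
    exact Real.sqrt_pos.2 hS.det_pos
  have hA : IsUnit A.det := hpos.ne'.isUnit
  have hembedding : MeasurableEmbedding (toEuclideanCLM (𝕜 := ℝ) A) :=
    (toEuclideanCLM (𝕜 := ℝ) A).continuous.measurableEmbedding
      (Function.LeftInverse.injective (toEuclideanCLM_inv_apply_apply hA))
  simp only [multivariateGaussian, zero_add]
  rw [hembedding.integral_map, stdGaussian_eq_withDensity,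
    integral_withDensity_eq_integral_toReal_smul (by fun_prop)
      (.of_forall fun _ => ENNReal.ofReal_lt_top)]
  have hdensity : ∀ x : EuclideanSpace ℝ ι,
      0 ≤ (√(2 * Real.pi) ^ Fintype.card ι)⁻¹ * Real.exp (-‖x‖ ^ 2 / 2) := fun x => by positivity
  have hchange := integral_comp_toEuclideanCLM hA fun x => ((√(2 * Real.pi) ^ Fintype.card ι)⁻¹ *
    Real.exp (-‖toEuclideanCLM (𝕜 := ℝ) A⁻¹ x‖ ^ 2 / 2)) • f x
  simp only [toEuclideanCLM_inv_apply_apply hA] at hchange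
  simp only [finrank_euclideanSpace, ENNReal.toReal_ofReal (hdensity _)]
  rw [hchange, ← integral_smul]
  simp only [A, sq_norm_toEuclideanCLM_inv_sqrt hS, smul_smul]
  rw [abs_of_pos hpos, hdet, mul_inv]
  congr with x
  ring_nf

theorem integral_mul_gaussDensity2 {S : Matrix (Fin 2) (Fin 2) ℝ} (hS : S.PosDef) (f : ℝ × ℝ → ℝ) :
    ∫ x, f x * gaussDensity2 S x = ∫ x, f (x 0, x 1) ∂multivariateGaussian 0 S := by
  rw [integral_multivariateGaussian_zero hS,
    ← (PiLp.volume_preserving_toLp (Fin 2)).integral_comp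
      (MeasurableEquiv.toLp 2 _).measurableEmbedding,
    ← (volume_preserving_finTwoArrow ℝ).symm.integral_comp
      MeasurableEquiv.finTwoArrow.symm.measurableEmbedding]
  refine integral_congr_ae (.of_forall fun x => ?_)
  have hx : (MeasurableEquiv.finTwoArrow.symm x : Fin 2 → ℝ) = ![x.1, x.2] := rfl
  simp only [hx, gaussDensity2, Fintype.card_fin, smul_eq_mul, Matrix.cons_val_zero,
    Matrix.cons_val_one, Real.sq_sqrt (by positivity : 0 ≤ 2 * Real.pi)]
  ring_nf

end GaussianDensity

section LevyContinuity

open ProbabilityTheory Topology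
open scoped RealInnerProductSpace BoundedContinuousFunction ENNReal

variable {ι E : Type*} [MeasurableSpace E]

/-- The law of `X i` when `i` is uniformly distributed on the finite set `T`; it is `0` for
empty `T`. -/
noncomputable def empiricalMeasure (T : Finset ι) (X : ι → E) : Measure E :=
  ∑ i ∈ T, (T.card : ℝ≥0∞)⁻¹ • Measure.dirac (X i)

theorem isProbabilityMeasure_empiricalMeasure {T : Finset ι} (hT : T.Nonempty) (X : ι → E) :
    IsProbabilityMeasure (empiricalMeasure T X) := by
  constructor
  simp only [empiricalMeasure, Measure.coe_finsetSum, Finset.sum_apply, Measure.smul_apply,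
    measure_univ, smul_eq_mul, mul_one, Finset.sum_const, nsmul_eq_mul]
  exact ENNReal.mul_inv_cancel (by exact_mod_cast hT.card_ne_zero) (ENNReal.natCast_ne_top _)

theorem integral_empiricalMeasure [MeasurableSingletonClass E] (T : Finset ι) (X : ι → E)
    {F : Type*} [NormedAddCommGroup F] [NormedSpace ℝ F] [CompleteSpace F] (g : E → F) :
    ∫ x, g x ∂empiricalMeasure T X = (T.card : ℝ)⁻¹ • ∑ i ∈ T, g (X i) := by
  rcases T.eq_empty_or_nonempty with rfl | hT
  · simp [empiricalMeasure]
  have hcard : (T.card : ℝ≥0∞)⁻¹ ≠ ∞ := by simpa using hT.ne_empty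
  rw [empiricalMeasure, integral_finsetSum_measure fun i _ =>
    (integrable_dirac enorm_lt_top).smul_measure hcard, Finset.smul_sum]
  simp only [integral_smul_measure, integral_dirac, ENNReal.toReal_inv, ENNReal.toReal_natCast]

theorem tendsto_average_of_tendsto_charFun [NormedAddCommGroup E] [InnerProductSpace ℝ E]
    [FiniteDimensional ℝ E] [BorelSpace E] {ι : ℕ → Type*} {T : ∀ n, Finset (ι n)}
    {X : ∀ n, ι n → E} {μ : Measure E} [IsProbabilityMeasure μ]
    (hX : ∀ t, Tendsto (fun n => (∑ i ∈ T n, Complex.exp (⟪X n i, t⟫ * Complex.I)) / (T n).card)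
      atTop (𝓝 (charFun μ t))) (f : E →ᵇ ℝ) :
    Tendsto (fun n => (∑ i ∈ T n, f (X n i)) / (T n).card) atTop (𝓝 (∫ x, f x ∂μ)) := by
  have hnonempty : ∀ᶠ n in atTop, (T n).Nonempty := by
    have hzero := (hX 0).eventually_ne (b₂ := 0) (by simp)
    filter_upwards [hzero] with n hn
    refine Finset.nonempty_iff_ne_empty.2 fun hempty => hn ?_
    simp [hempty]
  obtain ⟨N, hN⟩ := eventually_atTop.1 hnonempty
  let P (n : ℕ) : ProbabilityMeasure E := ⟨empiricalMeasure (T (n + N)) (X (n + N)),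
    isProbabilityMeasure_empiricalMeasure (hN _ (by omega)) _⟩
  have hP : Tendsto P atTop (𝓝 ⟨μ, inferInstance⟩) := by
    refine ProbabilityMeasure.tendsto_of_tendsto_charFun fun t => ?_
    refine ((tendsto_add_atTop_iff_nat N).2 (hX t)).congr fun n => ?_
    simp only [P, charFun_apply, ProbabilityMeasure.coe_mk, integral_empiricalMeasure,
      Complex.real_smul, Complex.ofReal_inv, Complex.ofReal_natCast, div_eq_inv_mul]
  refine (tendsto_add_atTop_iff_nat N).1
    ((ProbabilityMeasure.tendsto_iff_forall_integral_tendsto.1 hP f).congr fun n => ?_)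
  simp only [P, ProbabilityMeasure.coe_mk, integral_empiricalMeasure, smul_eq_mul, div_eq_inv_mul]

theorem tendsto_average_gaussDensity2 {ι : ℕ → Type*} {T : ∀ n, Finset (ι n)}
    {X : ∀ n, ι n → ℝ × ℝ} {S : Matrix (Fin 2) (Fin 2) ℝ} (hS : S.PosDef)
    (hX : ∀ s t : ℝ, Tendsto
      (fun n => (∑ i ∈ T n, Complex.exp ((s * (X n i).1 + t * (X n i).2 : ℝ) * Complex.I)) /
        (T n).card) atTop (𝓝 (Complex.exp (-(![s, t] ⬝ᵥ S *ᵥ ![s, t] : ℝ) / 2))))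
    {f : ℝ × ℝ → ℝ} (hf : Continuous f) {M : ℝ} (hM : ∀ x, |f x| ≤ M) :
    Tendsto (fun n => (∑ i ∈ T n, f (X n i)) / (T n).card) atTop
      (𝓝 (∫ x, f x * gaussDensity2 S x)) := by
  let g : EuclideanSpace ℝ (Fin 2) →ᵇ ℝ := .ofNormedAddCommGroup (fun x => f (x 0, x 1))
    (hf.comp (by fun_prop)) M fun x => hM _
  rw [integral_mul_gaussDensity2 hS]
  refine tendsto_average_of_tendsto_charFun (X := fun n i => !₂[(X n i).1, (X n i).2])
    (μ := multivariateGaussian 0 S) (fun t => ?_) g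
  have hvec : t.ofLp = ![t 0, t 1] := by
    ext i
    fin_cases i <;> rfl
  convert hX (t 0) (t 1) using 6 with n i
  · simp [PiLp.inner_apply, Fin.sum_univ_two, mul_comm]
  · rw [charFun_multivariateGaussian hS.posSemidef, inner_zero_right, Complex.ofReal_zero, zero_mul,
      zero_sub, neg_div, ← hvec]

end LevyContinuity

section PrudentWalks

/-- The ray issued from `p` in the direction `s`, with `p` itself removed, avoids `V`. -/
def IsFree (V : Set (ℤ × ℤ)) (p s : ℤ × ℤ) : Prop :=
  ∀ k : ℕ, 1 ≤ k → p + (k : ℤ) • s ∉ V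

/-- `π` is a prudent walk started at `p`, where the sites of `V` count as visited, and its endpoint
is the top-right corner of all visited sites. -/
def IsContinuation (V : Set (ℤ × ℤ)) (p : ℤ × ℤ) {n : ℕ} (π : Fin (n + 1) → ℤ × ℤ) : Prop :=
  π 0 = p ∧
    (∀ i : Fin n, IsStep (π i.succ - π i.castSucc) ∧
      IsFree (V ∪ π '' Iic i.castSucc) (π i.castSucc) (π i.succ - π i.castSucc)) ∧
    π (Fin.last n) ∈ upperBounds (V ∪ range π)

/-- The four unit steps. -/
def steps : Finset (ℤ × ℤ) := {(0, 1), (1, 0), (-1, 0), (0, -1)}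

variable {V : Set (ℤ × ℤ)} {p s : ℤ × ℤ} {n : ℕ}

theorem mem_steps : s ∈ steps ↔ IsStep s := by
  simp only [steps, Finset.mem_insert, Finset.mem_singleton, IsStep]
  tauto

theorem isFree_preimage_swap :
    IsFree (Prod.swap ⁻¹' V) p.swap s.swap ↔ IsFree V p s := Iff.rfl

theorem not_isFree_of_add_mem (h : p + s ∈ V) : ¬IsFree V p s := fun hfree =>
  hfree 1 le_rfl (by simpa using h)

theorem isFree_prod_mk {a b u v : ℤ} :
    IsFree V (a, b) (u, v) ↔ ∀ k : ℕ, 1 ≤ k → (a + k * u, b + k * v) ∉ V := by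
  simp only [IsFree, Prod.smul_mk, Prod.mk_add_mk, smul_eq_mul]

theorem image_Iic_succ (π : Fin (n + 2) → ℤ × ℤ) (i : Fin (n + 1)) :
    π '' Iic i.succ = insert (π 0) (Fin.tail π '' Iic i) := by
  ext q
  simp only [mem_image, mem_Iic, Fin.exists_fin_succ, Fin.tail, Fin.succ_le_succ_iff, Fin.zero_le,
    true_and, mem_insert_iff, eq_comm]

theorem range_eq_insert_range_tail (π : Fin (n + 2) → ℤ × ℤ) :
    range π = insert (π 0) (range (Fin.tail π)) := by
  rw [← Fin.range_cons, Fin.cons_self_tail]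

theorem isContinuation_iff_tail (hp : p ∈ V) {π : Fin (n + 2) → ℤ × ℤ} :
    IsContinuation V p π ↔ π 0 = p ∧ IsStep (π 1 - p) ∧ IsFree V p (π 1 - p) ∧
      IsContinuation (insert (π 1) V) (π 1) (Fin.tail π) := by
  refine and_congr_right fun hzero => ?_
  have himage_zero : V ∪ π '' Iic 0 = V := by
    have : Iic (0 : Fin (n + 2)) = {0} := Iic_bot
    simp [this, hzero, hp]
  have himage (i : Fin (n + 1)) :
      V ∪ π '' Iic i.succ = insert (π 1) V ∪ Fin.tail π '' Iic i := by
    have : π 1 ∈ Fin.tail π '' Iic i := ⟨0, Fin.zero_le i, rfl⟩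
    grind [image_Iic_succ]
  have hrange : V ∪ range π = insert (π 1) V ∪ range (Fin.tail π) := by
    have : π 1 ∈ range (Fin.tail π) := ⟨0, rfl⟩
    grind [range_eq_insert_range_tail]
  simp only [IsContinuation, Fin.forall_fin_succ, Fin.castSucc_zero, himage_zero, hzero, himage,
    ← Fin.succ_castSucc, hrange, ← Fin.succ_last, and_assoc, Fin.tail]
  exact ⟨fun ⟨hs, hfree, h⟩ => ⟨hs, hfree, rfl, h⟩, fun ⟨hs, hfree, _, h⟩ => ⟨hs, hfree, h⟩⟩

open Classical in
/-- The finite set of all walks satisfying `IsContinuation V p`, enumerated step by step. -/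
noncomputable def continuations : (n : ℕ) → Set (ℤ × ℤ) → ℤ × ℤ → Finset (Fin (n + 1) → ℤ × ℤ)
  | 0, V, p => if p ∈ upperBounds V then {fun _ => p} else ∅
  | n + 1, V, p => (steps.filter (IsFree V p)).biUnion fun s =>
      (continuations n (insert (p + s) V) (p + s)).image (Fin.cons p)

theorem mem_continuations : ∀ {n : ℕ} {V : Set (ℤ × ℤ)} {p : ℤ × ℤ} {π : Fin (n + 1) → ℤ × ℤ},
    p ∈ V → (π ∈ continuations n V p ↔ IsContinuation V p π)
  | 0, V, p, π, hp => by
    have hconst : π 0 = p ↔ π = fun _ => p := by rw [funext_iff, Fin.forall_fin_one]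
    simp only [continuations, IsContinuation, IsEmpty.forall_iff, true_and, hconst]
    split_ifs with hcorner <;> simp only [Finset.mem_singleton, Finset.notMem_empty, false_iff]
    · refine ⟨fun h => ⟨h, ?_⟩, fun h => h.1⟩
      simpa [h, hp] using hcorner
    · rintro ⟨rfl, h⟩
      exact hcorner (by simpa [hp] using h)
  | n + 1, V, p, π, hp => by
    have ih (s : ℤ × ℤ) (ρ : Fin (n + 1) → ℤ × ℤ) := mem_continuations (π := ρ)
      (mem_insert (p + s) V)
    simp only [continuations, Finset.mem_biUnion, Finset.mem_filter, mem_steps, Finset.mem_image,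
      ih]
    constructor
    · rintro ⟨s, ⟨hs, hfree⟩, ρ, hρ, rfl⟩
      have hone : (Fin.cons p ρ : Fin (n + 2) → ℤ × ℤ) 1 = p + s := hρ.1
      rw [isContinuation_iff_tail hp, hone, add_sub_cancel_left, Fin.tail_cons]
      exact ⟨rfl, hs, hfree, hρ⟩
    · intro h
      obtain ⟨hzero, hs, hfree, htail⟩ := (isContinuation_iff_tail hp).1 h
      refine ⟨π 1 - p, ⟨hs, hfree⟩, Fin.tail π, by rwa [add_sub_cancel], ?_⟩
      rw [← hzero, Fin.cons_self_tail]

theorem mem_twoSidedSet_iff {L : ℕ} {π : Fin (L + 1) → ℤ × ℤ} :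
    π ∈ twoSidedSet L ↔
      IsContinuation (Iic 0) 0 π ∧ ∀ h : 0 < L, π ⟨1, Nat.succ_lt_succ h⟩ = (1, 0) := by
  have hfree (i : Fin L) :
      IsFree (Iic 0 ∪ π '' Iic i.castSucc) (π i.castSucc) (π i.succ - π i.castSucc) ↔
        (∀ k : ℕ, 1 ≤ k → ∀ j ≤ i.castSucc,
          π i.castSucc + (k : ℤ) • (π i.succ - π i.castSucc) ≠ π j) ∧
        ∀ k : ℕ, 1 ≤ k → ¬π i.castSucc + (k : ℤ) • (π i.succ - π i.castSucc) ≤ 0 := by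
    simp only [IsFree, mem_union, mem_Iic, mem_image, not_or, not_exists, not_and]
    grind
  have hcorner (hzero : π 0 = 0) :
      π (Fin.last L) ∈ upperBounds (Iic 0 ∪ range π) ↔ ∀ i, π i ≤ π (Fin.last L) := by
    simp only [upperBounds_union, upperBounds_Iic, mem_inter_iff, mem_Ici, mem_upperBounds,
      forall_mem_range, and_iff_right_iff_imp]
    exact fun h => hzero ▸ h 0
  simp only [twoSidedSet, prudentSet, mem_ofPred_eq, IsContinuation, hfree]
  constructor
  · rintro ⟨⟨hzero, hstep⟩, hquadrant, hend, hone⟩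
    exact ⟨⟨hzero, fun i => ⟨(hstep i).1, (hstep i).2, hquadrant i⟩, (hcorner hzero).2 hend⟩, hone⟩
  · rintro ⟨⟨hzero, hstep, hend⟩, hone⟩
    exact ⟨⟨hzero, fun i => ⟨(hstep i).1, (hstep i).2.1⟩⟩, fun i => (hstep i).2.2,
      (hcorner hzero).1 hend, hone⟩

theorem isContinuation_Iic_zero_iff {n : ℕ} {π : Fin (n + 2) → ℤ × ℤ} :
    (IsContinuation (Iic 0) 0 π ∧ π 1 = (1, 0)) ↔
      π 0 = 0 ∧ IsContinuation (insert (1, 0) (Iic 0)) (1, 0) (Fin.tail π) := by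
  have hstep : IsStep ((1, 0) - 0) := by simp [IsStep]
  have hfree : IsFree (Iic 0) 0 ((1, 0) - 0) := by
    intro k hk hmem
    have hle : (k : ℤ) ≤ 0 := by simpa using (Prod.le_def.1 hmem).1
    omega
  rw [isContinuation_iff_tail self_mem_Iic]
  constructor
  · rintro ⟨⟨hzero, -, -, htail⟩, hone⟩
    exact ⟨hzero, hone ▸ htail⟩
  · rintro ⟨hzero, htail⟩
    have hone : π 1 = (1, 0) := htail.1
    rw [hone]
    exact ⟨⟨hzero, hstep, hfree, htail⟩, rfl⟩

theorem twoSidedSet_succ (n : ℕ) :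
    twoSidedSet (n + 1) = (fun π : Fin (n + 1) → ℤ × ℤ => (Fin.cons 0 π : Fin (n + 2) → ℤ × ℤ)) ''
      (continuations n (insert (1, 0) (Iic 0)) (1, 0)) := by
  ext π
  rw [mem_twoSidedSet_iff, forall_prop_of_true n.succ_pos]
  refine isContinuation_Iic_zero_iff.trans ⟨fun h => ⟨Fin.tail π, ?_, ?_⟩, ?_⟩
  · exact (mem_continuations (mem_insert _ _)).2 h.2
  · exact h.1 ▸ Fin.cons_self_tail π
  · rintro ⟨ρ, hρ, rfl⟩
    exact ⟨rfl, (mem_continuations (mem_insert _ _)).1 hρ⟩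

theorem finite_twoSidedSet (n : ℕ) : (twoSidedSet (n + 1)).Finite := by
  rw [twoSidedSet_succ]
  exact (Finset.finite_toSet _).image _

section EndpointSum

variable {K : Type*} [Field K]

/-- The generating function of the endpoints of the walks in `continuations n V p`. -/
noncomputable def endpointSum (n : ℕ) (V : Set (ℤ × ℤ)) (p : ℤ × ℤ) (x y : K) : K :=
  ∑ π ∈ continuations n V p, x ^ (π (Fin.last n)).1 * y ^ (π (Fin.last n)).2

open Classical in
theorem endpointSum_zero (V : Set (ℤ × ℤ)) (p : ℤ × ℤ) (x y : K) :
    endpointSum 0 V p x y = if p ∈ upperBounds V then x ^ p.1 * y ^ p.2 else 0 := by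
  rw [endpointSum, continuations, apply_ite (Finset.sum · _), Finset.sum_singleton,
    Finset.sum_empty]

open Classical in
theorem endpointSum_succ (n : ℕ) (V : Set (ℤ × ℤ)) (p : ℤ × ℤ) (x y : K) :
    endpointSum (n + 1) V p x y =
      ∑ s ∈ steps, if IsFree V p s then endpointSum n (insert (p + s) V) (p + s) x y else 0 := by
  have hinj : Function.Injective
      fun π : Fin (n + 1) → ℤ × ℤ => (Fin.cons p π : Fin (n + 2) → ℤ × ℤ) :=
    Fin.cons_right_injective (α := fun _ => ℤ × ℤ) p
  rw [endpointSum, continuations, Finset.sum_biUnion, Finset.sum_filter]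
  · simp only [Finset.sum_image hinj.injOn, ← Fin.succ_last, Fin.cons_succ, endpointSum]
  · intro s _ s' _ hss'
    refine (Finset.disjoint_image hinj).2 (Finset.disjoint_left.2 fun ρ hρ hρ' => hss' ?_)
    rw [mem_continuations (mem_insert _ _)] at hρ hρ'
    exact add_left_cancel (hρ.1.symm.trans hρ'.1)

open Classical in
theorem endpointSum_swap : ∀ (n : ℕ) (V : Set (ℤ × ℤ)) (p : ℤ × ℤ) (x y : K),
    endpointSum n (Prod.swap ⁻¹' V) p.swap y x = endpointSum n V p x y
  | 0, V, p, x, y => by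
    have hcorner : p.swap ∈ upperBounds (Prod.swap ⁻¹' V) ↔ p ∈ upperBounds V := by
      simp only [mem_upperBounds, mem_preimage]
      refine ⟨fun h q hq => Prod.swap_le_swap.1 (h q.swap hq), fun h q hq => ?_⟩
      exact Prod.swap_le_swap.1 (h q.swap hq)
    rw [endpointSum_zero, endpointSum_zero, if_congr hcorner rfl rfl, mul_comm, Prod.fst_swap,
      Prod.snd_swap]
  | n + 1, V, p, x, y => by
    rw [endpointSum_succ, endpointSum_succ]
    refine Finset.sum_nbij' Prod.swap Prod.swap (by decide) (by decide)
      (fun _ _ => Prod.swap_swap _)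
      (fun _ _ => Prod.swap_swap _) fun s _ => ?_
    have hinsert : insert (p.swap + s) (Prod.swap ⁻¹' V) = Prod.swap ⁻¹' insert (p + s.swap) V := by
      ext q
      rw [mem_insert_iff, ← Prod.swap_inj]
      rfl
    have hswap := endpointSum_swap n (insert (p + s.swap) V) (p + s.swap) x y
    exact if_congr (isFree_preimage_swap (s := s.swap)) (hinsert ▸ hswap) rfl

end EndpointSum

/-- The last move of a walk since its last change of the upper or right border of the visited sites:
`north` if this border has just been pushed upwards, `east` or `west` for a move along it. -/
inductive Move
  | north
  | east
  | west
  deriving DecidableEq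

/-- `(X, Y)` is the top-right corner of the visited sites `V`, which block every descent from the
row at height `Y` and every column. -/
structure HasCorner (V : Set (ℤ × ℤ)) (X Y : ℤ) : Prop where
  mem_upperBounds : (X, Y) ∈ upperBounds V
  exists_mem_row : ∀ b ≤ Y, ∃ a, (a, b) ∈ V
  exists_mem_column : ∀ a ≤ X, ∃ b < Y, (a, b) ∈ V

/-- The walker stands on the highest visited row, `d` sites left of the corner `(X, Y)`, and `m`
was its last move on this row. -/
structure WalkerAt (m : Move) (d : ℕ) (V : Set (ℤ × ℤ)) (X Y : ℤ) : Prop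
    extends HasCorner V X Y where
  mem : (X - d, Y) ∈ V
  row : match m with
    | .north => ∀ a, (a, Y) ∈ V → a = X - d
    | .east => (∀ a, (a, Y) ∈ V → a ≤ X - d) ∧ (X - d - 1, Y) ∈ V
    | .west => (∀ a, (a, Y) ∈ V → X - d ≤ a) ∧ (X - d + 1, Y) ∈ V

section WalkerAt

variable {m : Move} {d : ℕ} {X Y : ℤ}

theorem HasCorner.insert_left (h : HasCorner V X Y) {a Y' : ℤ} (ha : a ≤ X) (hle : Y ≤ Y')
    (hle' : Y' ≤ Y + 1) : HasCorner (insert (a, Y') V) X Y' where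
  mem_upperBounds := by
    rintro q (rfl | hq)
    · exact ⟨ha, le_rfl⟩
    · exact ⟨(h.mem_upperBounds hq).1, (h.mem_upperBounds hq).2.trans hle⟩
  exists_mem_row b hb := by
    rcases hb.eq_or_lt with rfl | hb
    · exact ⟨a, mem_insert _ _⟩
    · obtain ⟨c, hc⟩ := h.exists_mem_row b (by omega)
      exact ⟨c, mem_insert_of_mem _ hc⟩
  exists_mem_column c hc := by
    obtain ⟨b, hb, hmem⟩ := h.exists_mem_column c hc
    exact ⟨b, hb.trans_le hle, mem_insert_of_mem _ hmem⟩

theorem HasCorner.insert_right (h : HasCorner V X Y) :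
    HasCorner (Prod.swap ⁻¹' insert (X + 1, Y) V) Y (X + 1) where
  mem_upperBounds := by
    rintro q (hq | hq)
    · rw [Prod.swap_eq_iff_eq_swap] at hq
      exact hq.le
    · exact ⟨(h.mem_upperBounds hq).2, (h.mem_upperBounds hq).1.trans (by omega)⟩
  exists_mem_row b hb := by
    rcases hb.eq_or_lt with rfl | hb
    · exact ⟨Y, mem_insert _ _⟩
    · obtain ⟨c, -, hc⟩ := h.exists_mem_column b (by omega)
      exact ⟨c, mem_insert_of_mem _ hc⟩
  exists_mem_column c hc := by
    obtain ⟨a, ha⟩ := h.exists_mem_row c hc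
    exact ⟨a, Int.lt_add_one_of_le (h.mem_upperBounds ha).1, mem_insert_of_mem _ ha⟩

theorem WalkerAt.isFree_north (h : WalkerAt m d V X Y) : IsFree V (X - d, Y) (0, 1) := by
  refine isFree_prod_mk.2 fun k hk hmem => ?_
  have := (h.mem_upperBounds hmem).2
  dsimp only at this
  omega

theorem WalkerAt.not_isFree_south (h : WalkerAt m d V X Y) : ¬IsFree V (X - d, Y) (0, -1) := by
  intro hfree
  obtain ⟨b, hb, hmem⟩ := h.exists_mem_column (X - d) (by omega)
  refine isFree_prod_mk.1 hfree (Y - b).toNat (by omega) ?_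
  rwa [Int.toNat_of_nonneg (by omega), mul_zero, add_zero, mul_neg_one, ← sub_eq_add_neg,
    sub_sub_cancel]

theorem WalkerAt.isFree_east_iff (h : WalkerAt m d V X Y) :
    IsFree V (X - d, Y) (1, 0) ↔ m ≠ .west := by
  have hrow := h.row
  have hblocked : (X - d + 1, Y) ∈ V → ¬IsFree V (X - d, Y) (1, 0) := fun hmem =>
    not_isFree_of_add_mem (by simpa using hmem)
  rw [isFree_prod_mk] at hblocked ⊢
  simp only [mul_one, mul_zero, add_zero] at hblocked ⊢
  cases m <;> simp only [ne_eq, reduceCtorEq, not_false_eq_true, not_true_eq_false, iff_true,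
    iff_false]
  · exact fun k hk hmem => by have := hrow _ hmem; omega
  · exact fun k hk hmem => by have := hrow.1 _ hmem; omega
  · exact hblocked hrow.2

theorem WalkerAt.isFree_west_iff (h : WalkerAt m d V X Y) :
    IsFree V (X - d, Y) (-1, 0) ↔ m ≠ .east := by
  have hrow := h.row
  have hblocked : (X - d - 1, Y) ∈ V → ¬IsFree V (X - d, Y) (-1, 0) := fun hmem =>
    not_isFree_of_add_mem (by simpa [sub_eq_add_neg] using hmem)
  rw [isFree_prod_mk] at hblocked ⊢
  simp only [mul_neg_one, mul_zero, add_zero] at hblocked ⊢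
  cases m <;> simp only [ne_eq, reduceCtorEq, not_false_eq_true, not_true_eq_false, iff_true,
    iff_false]
  · exact fun k hk hmem => by have := hrow _ hmem; omega
  · exact hblocked hrow.2
  · exact fun k hk hmem => by have := hrow.1 _ hmem; omega

theorem WalkerAt.step_north (h : WalkerAt m d V X Y) :
    WalkerAt .north d (insert (X - d, Y + 1) V) X (Y + 1) where
  toHasCorner := h.toHasCorner.insert_left (by omega) (by omega) le_rfl
  mem := mem_insert _ _
  row := by
    rintro a (ha | ha)
    · exact (Prod.mk.inj ha).1
    · exact absurd (h.mem_upperBounds ha).2 (by dsimp only; omega)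

theorem WalkerAt.step_west (h : WalkerAt m d V X Y) (hm : m ≠ .east) :
    WalkerAt .west (d + 1) (insert (X - d - 1, Y) V) X Y where
  toHasCorner := h.toHasCorner.insert_left (by omega) le_rfl (by omega)
  mem := by simp [sub_sub]
  row := by
    have hmem := h.mem
    have hrow := h.row
    push_cast
    simp only [mem_insert_iff, Prod.mk.injEq, and_true, sub_add_eq_sub_sub, sub_add_cancel, hmem,
      or_true]
    rintro a (rfl | ha)
    · exact le_rfl
    · cases m
      · have := hrow a ha; omega
      · exact absurd rfl hm
      · have := hrow.1 a ha; omega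

theorem WalkerAt.step_east (h : WalkerAt m (d + 1) V X Y) (hm : m ≠ .west) :
    WalkerAt .east d (insert (X - d, Y) V) X Y where
  toHasCorner := h.toHasCorner.insert_left (by omega) le_rfl (by omega)
  mem := mem_insert _ _
  row := by
    have hmem := h.mem
    have hrow := h.row
    push_cast [sub_add_eq_sub_sub] at hmem hrow
    refine ⟨?_, mem_insert_of_mem _ hmem⟩
    rintro a (ha | ha)
    · exact (Prod.mk.inj ha).1.le
    · cases m
      · have := hrow a ha; omega
      · have := hrow.1 a ha; omega
      · exact absurd rfl hm

theorem HasCorner.walkerAt_right (h : HasCorner V X Y) :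
    WalkerAt .north 0 (Prod.swap ⁻¹' insert (X + 1, Y) V) Y (X + 1) where
  toHasCorner := h.insert_right
  mem := by simp
  row := by
    rintro a (ha | ha)
    · simpa using (Prod.mk.inj ha).2
    · exact absurd (h.mem_upperBounds ha).1 (by simp)

end WalkerAt

section CompletionSum

variable {K : Type*}

/-- The generating function of the number `i` of right steps and `j` of up steps by which the corner
has moved when a walk satisfying `WalkerAt m d` is completed by `n` steps; a step across the right
border exchanges the roles of the two coordinates. -/
def completionSum [CommSemiring K] : ℕ → Move → ℕ → K → K → K
  | 0, _, d, _, _ => if d = 0 then 1 else 0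
  | n + 1, m, d, x, y => y * completionSum n .north d x y +
      (if m = .west then 0 else
        if d = 0 then x * completionSum n .north 0 y x else completionSum n .east (d - 1) x y) +
      (if m = .east then 0 else completionSum n .west (d + 1) x y)

variable [Field K]

open Classical in
theorem endpointSum_succ_mk (n : ℕ) (V : Set (ℤ × ℤ)) (a b : ℤ) (x y : K) :
    endpointSum (n + 1) V (a, b) x y =
      (if IsFree V (a, b) (0, 1) then endpointSum n (insert (a, b + 1) V) (a, b + 1) x y else 0) +
      (if IsFree V (a, b) (1, 0) then endpointSum n (insert (a + 1, b) V) (a + 1, b) x y else 0) +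
      (if IsFree V (a, b) (-1, 0) then endpointSum n (insert (a - 1, b) V) (a - 1, b) x y else 0) +
      (if IsFree V (a, b) (0, -1) then
        endpointSum n (insert (a, b - 1) V) (a, b - 1) x y else 0) := by
  rw [endpointSum_succ, steps, Finset.sum_insert (by decide), Finset.sum_insert (by decide),
    Finset.sum_insert (by decide), Finset.sum_singleton]
  simp only [Prod.mk_add_mk, add_zero, ← sub_eq_add_neg, add_assoc]

open Classical in
theorem WalkerAt.endpointSum_eq : ∀ {n : ℕ} {m : Move} {d : ℕ} {V : Set (ℤ × ℤ)} {X Y : ℤ}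
    {x y : K}, WalkerAt m d V X Y → x ≠ 0 → y ≠ 0 →
    endpointSum n V (X - d, Y) x y = x ^ X * y ^ Y * completionSum n m d x y
  | 0, m, d, V, X, Y, x, y, h, _, _ => by
    have hcorner : (X - d, Y) ∈ upperBounds V ↔ d = 0 := by
      constructor
      · intro hub
        obtain ⟨b, -, hmem⟩ := h.exists_mem_column X le_rfl
        have := (hub hmem).1
        dsimp only at this
        omega
      · rintro rfl
        simpa using h.mem_upperBounds
    rw [endpointSum_zero, if_congr hcorner rfl rfl, completionSum, mul_ite, mul_one, mul_zero]
    exact if_ctx_congr Iff.rfl (by rintro rfl; simp) fun _ => rfl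
  | n + 1, m, d, V, X, Y, x, y, h, hx, hy => by
    have hnorth := h.step_north.endpointSum_eq (n := n) hx hy
    have heast (hm : m ≠ .west) : endpointSum n (insert (X - d + 1, Y) V) (X - d + 1, Y) x y =
        x ^ X * y ^ Y * if d = 0 then x * completionSum n .north 0 y x
          else completionSum n .east (d - 1) x y := by
      cases d with
      | zero =>
        have hright := h.walkerAt_right.endpointSum_eq (n := n) hy hx
        rw [Nat.cast_zero, sub_zero] at hright ⊢
        rw [if_pos rfl, ← endpointSum_swap, Prod.swap_prod_mk, hright, zpow_add_one₀ hx]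
        ring
      | succ d =>
        have hstep := (h.step_east hm).endpointSum_eq (n := n) hx hy
        rwa [Nat.cast_succ, sub_add_eq_sub_sub, sub_add_cancel]
    have hwest (hm : m ≠ .east) : endpointSum n (insert (X - d - 1, Y) V) (X - d - 1, Y) x y =
        x ^ X * y ^ Y * completionSum n .west (d + 1) x y := by
      have hstep := (h.step_west hm).endpointSum_eq (n := n) hx hy
      rwa [Nat.cast_succ, sub_add_eq_sub_sub] at hstep
    rw [endpointSum_succ_mk, if_pos h.isFree_north, if_neg h.not_isFree_south,
      if_congr h.isFree_east_iff rfl rfl, if_congr h.isFree_west_iff rfl rfl, ite_not, ite_not,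
      hnorth, zpow_add_one₀ hy, completionSum, mul_add, mul_add, add_zero]
    congr 1
    · congr 1
      · ring
      · by_cases hm : m = .west
        · rw [if_pos hm, if_pos hm, mul_zero]
        · rw [if_neg hm, if_neg hm, heast hm]
    · by_cases hm : m = .east
      · rw [if_pos hm, if_pos hm, mul_zero]
      · rw [if_neg hm, if_neg hm, hwest hm]

theorem hasCorner_Iic (X Y : ℤ) : HasCorner (Iic (X, Y)) X Y where
  mem_upperBounds _ hq := hq
  exists_mem_row _ hb := ⟨X, le_rfl, hb⟩
  exists_mem_column _ ha := ⟨Y - 1, sub_one_lt Y, ha, (sub_one_lt Y).le⟩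

theorem sum_twoSidedSet (n : ℕ) {x y : K} (hx : x ≠ 0) (hy : y ≠ 0) :
    ∑ᶠ π ∈ twoSidedSet (n + 1), x ^ (π (Fin.last (n + 1))).1 * y ^ (π (Fin.last (n + 1))).2 =
      x * completionSum n .north 0 y x := by
  have hstart := (hasCorner_Iic 0 0).walkerAt_right.endpointSum_eq (n := n) hy hx
  rw [Nat.cast_zero, sub_zero, zpow_zero, one_mul, zero_add, zpow_one] at hstart
  rw [← hstart]
  refine Eq.trans ?_ (endpointSum_swap n (insert (1, 0) (Iic 0)) (1, 0) x y).symm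
  rw [twoSidedSet_succ, finsum_mem_image (Fin.cons_right_injective (α := fun _ => ℤ × ℤ) 0).injOn,
    finsum_mem_coe_finset]
  simp only [← Fin.succ_last, Fin.cons_succ, endpointSum]

end CompletionSum

section Blocks

variable {K : Type*} [CommSemiring K]

/-- The generating function, by number of up steps, of the walks of length `n` which start with last
move `m` at distance `d` from the right border of the visited sites and reach it only at the end. -/
def firstPassage (y : K) : ℕ → Move → ℕ → K
  | 0, _, d => if d = 0 then 1 else 0
  | _ + 1, _, 0 => 0
  | n + 1, m, d + 1 => y * firstPassage y n .north (d + 1) +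
      (if m = .west then 0 else firstPassage y n .east d) +
      (if m = .east then 0 else firstPassage y n .west (d + 2))

/-- The generating function, by number of up steps, of the blocks of length `n`: a block is a step
north out of the top-right corner of the visited sites, possibly followed by an excursion to the
west which ends when the walk is back at the top-right corner. -/
def block (y : K) : ℕ → K
  | 0 => 0
  | 1 => y
  | n + 2 => y * firstPassage y n .west 1

theorem completionSum_eq_sum_firstPassage (x y : K) {n : ℕ} {m : Move} {d : ℕ}
    (h : d ≠ 0 ∨ m = .east) :
    completionSum n m d x y =
      ∑ k ∈ Finset.range (n + 1), firstPassage y k m d * completionSum (n - k) .east 0 x y := by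
  induction n generalizing m d with
  | zero => simp [completionSum, firstPassage]
  | succ n ih =>
    cases d with
    | zero =>
      obtain rfl : m = .east := h.resolve_left (by simp)
      simp [Finset.sum_range_succ', firstPassage]
    | succ d =>
      have hnorth := ih (m := .north) (d := d + 1) (.inl d.succ_ne_zero)
      have heast := ih (m := .east) (d := d) (.inr rfl)
      have hwest := ih (m := .west) (d := d + 2) (.inl (d + 1).succ_ne_zero)
      rw [Finset.sum_range_succ']
      simp only [completionSum, firstPassage, Nat.add_eq_zero_iff, one_ne_zero, and_false, if_false,
        zero_mul, add_zero, add_tsub_cancel_right, Nat.add_sub_add_right, add_mul, ite_mul,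
        Finset.sum_add_distrib, mul_assoc, hnorth, heast, hwest, Finset.mul_sum]
      split_ifs <;> simp only [Finset.sum_const_zero]

theorem completionSum_east_zero_succ (n : ℕ) (x y : K) :
    completionSum (n + 1) .east 0 x y =
      y * completionSum n .north 0 x y + x * completionSum n .north 0 y x := by
  simp [completionSum]

theorem completionSum_east_zero_comm (n : ℕ) (x y : K) :
    completionSum n .east 0 x y = completionSum n .east 0 y x := by
  cases n with
  | zero => rfl
  | succ n => rw [completionSum_east_zero_succ, completionSum_east_zero_succ, add_comm]

theorem mul_completionSum_north (n : ℕ) (x y : K) :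
    y * completionSum n .north 0 x y =
      ∑ k ∈ Finset.range (n + 1), block y (k + 1) * completionSum (n - k) .east 0 x y := by
  cases n with
  | zero => simp [completionSum, block]
  | succ n =>
    have hnorth : completionSum (n + 1) .north 0 x y =
        completionSum (n + 1) .east 0 x y + completionSum n .west 1 x y := by
      simp [completionSum]
    rw [hnorth, Finset.sum_range_succ', mul_add,
      completionSum_eq_sum_firstPassage x y (.inl one_ne_zero), Finset.mul_sum, add_comm]
    simp only [block, Nat.add_sub_add_right, mul_assoc, Nat.sub_zero]

theorem isRenewalSeq_completionSum (x y : ℂ) :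
    IsRenewalSeq (fun n => block x n + block y n) fun n => completionSum n .east 0 x y where
  zero := if_pos rfl
  succ n := by
    rw [completionSum_east_zero_succ, mul_completionSum_north, mul_completionSum_north,
      add_comm]
    simp only [add_mul, Finset.sum_add_distrib, completionSum_east_zero_comm _ y x]

theorem sum_twoSidedSet_eq_sum_block {K : Type*} [Field K] (n : ℕ) {x y : K} (hx : x ≠ 0)
    (hy : y ≠ 0) :
    ∑ᶠ π ∈ twoSidedSet (n + 1), x ^ (π (Fin.last (n + 1))).1 * y ^ (π (Fin.last (n + 1))).2 =
      ∑ k ∈ Finset.range (n + 1), block x (k + 1) * completionSum (n - k) .east 0 x y := by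
  simp only [sum_twoSidedSet n hx hy, mul_completionSum_north, completionSum_east_zero_comm _ y x]

theorem map_firstPassage {K' : Type*} [CommSemiring K'] (f : K →+* K') (y : K) :
    ∀ (n : ℕ) (m : Move) (d : ℕ), f (firstPassage y n m d) = firstPassage (f y) n m d
  | 0, _, d => by simp [firstPassage, apply_ite f]
  | _ + 1, _, 0 => by simp [firstPassage]
  | n + 1, m, d + 1 => by
    simp only [firstPassage, map_add, map_mul, apply_ite f, map_zero, map_firstPassage f y n]

theorem map_block {K' : Type*} [CommSemiring K'] (f : K →+* K') (y : K) :
    ∀ n : ℕ, f (block y n) = block (f y) n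
  | 0 => map_zero f
  | 1 => rfl
  | n + 2 => by rw [block, block, map_mul, map_firstPassage]

open Polynomial in
theorem natDegree_firstPassage_X_le :
    ∀ (n : ℕ) (m : Move) (d : ℕ), (firstPassage (X : ℕ[X]) n m d).natDegree ≤ n
  | 0, _, d => by
    rw [firstPassage]
    split_ifs <;> simp
  | _ + 1, _, 0 => by simp [firstPassage]
  | n + 1, m, d + 1 => by
    have ih := natDegree_firstPassage_X_le n
    have ihsucc (m : Move) (d : ℕ) : (firstPassage (X : ℕ[X]) n m d).natDegree ≤ n + 1 :=
      (ih m d).trans n.le_succ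
    have hnorth : (X * firstPassage (X : ℕ[X]) n .north (d + 1)).natDegree ≤ n + 1 :=
      natDegree_mul_le.trans (by linarith [ih .north (d + 1), natDegree_X_le (R := ℕ)])
    rw [firstPassage]
    refine natDegree_add_le_of_degree_le (natDegree_add_le_of_degree_le hnorth ?_) ?_ <;>
      split_ifs <;> simp [ihsucc]

open Polynomial in
theorem natDegree_block_X_le : ∀ n : ℕ, (block (X : ℕ[X]) n).natDegree ≤ n
  | 0 => by simp [block]
  | 1 => natDegree_X_le
  | n + 2 => natDegree_mul_le.trans <| by
    linarith [natDegree_firstPassage_X_le n .west 1, natDegree_X_le (R := ℕ)]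

open Polynomial in
/-- The number of blocks with `n` steps, `h` of which are up steps. -/
noncomputable def blockCount (n h : ℕ) : ℕ :=
  (block (X : ℕ[X]) n).coeff h

theorem blockCount_eq_zero {n h : ℕ} (hnh : n < h) : blockCount n h = 0 :=
  Polynomial.coeff_eq_zero_of_natDegree_lt ((natDegree_block_X_le n).trans_lt hnh)

theorem block_eq_sum (y : K) (n : ℕ) :
    block y n = ∑ h ∈ Finset.range (n + 1), (blockCount n h : K) * y ^ h := by
  have hmap := map_block (Polynomial.eval₂RingHom (Nat.castRingHom K) y) Polynomial.X n
  rw [Polynomial.coe_eval₂RingHom, Polynomial.eval₂_X] at hmap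
  rw [← hmap, Polynomial.eval₂_eq_sum_range' _ (Nat.lt_succ_of_le (natDegree_block_X_le n))]
  rfl

theorem blockCount_one_one : blockCount 1 1 = 1 := by
  simp [blockCount, block]

theorem blockCount_four_two : blockCount 4 2 = 1 := by
  simp [blockCount, block, firstPassage]

end Blocks

section BlockRadius

theorem block_one_eq_natCast (n : ℕ) : block (1 : ℝ) n = ((block (1 : ℕ) n : ℕ) : ℝ) := by
  simpa using (map_block (Nat.castRingHom ℝ) 1 n).symm

theorem block_one_nonneg (n : ℕ) : 0 ≤ block (1 : ℝ) n :=
  (block_one_eq_natCast n).symm ▸ Nat.cast_nonneg _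

/-- A supersolution of the recursion of `firstPassage 1`. At the radius `√2 - 1` the weights `1`,
`1 / √2`, `1 / √2` solve it exactly; rounding the radius down to `0.414` leaves room for a
contraction factor `0.9997`. -/
noncomputable def Move.weight : Move → ℝ
  | .north => 1
  | .east => 0.707
  | .west => 0.707

theorem firstPassage_one_mul_pow_le : ∀ (n : ℕ) (m : Move) (d : ℕ),
    firstPassage (1 : ℝ) n m d * 0.414 ^ n ≤ 2 * 0.9997 ^ n * m.weight
  | 0, m, d => by
    rw [firstPassage]
    cases m <;> split_ifs <;> norm_num [Move.weight]
  | _ + 1, m, 0 => by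
    rw [firstPassage, zero_mul]
    cases m <;> norm_num [Move.weight]
  | n + 1, m, d + 1 => by
    have hnorth := firstPassage_one_mul_pow_le n .north (d + 1)
    have heast := firstPassage_one_mul_pow_le n .east d
    have hwest := firstPassage_one_mul_pow_le n .west (d + 2)
    have hpow : (0 : ℝ) ≤ 0.9997 ^ n := by positivity
    rw [firstPassage, pow_succ, pow_succ]
    cases m <;> simp only [Move.weight, reduceCtorEq, if_true, if_false] at * <;> linarith

theorem summable_block_one_mul_pow : Summable fun n => block (1 : ℝ) n * 0.414 ^ n := by
  rw [← summable_nat_add_iff 2]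
  have hgeom : Summable fun n : ℕ => (2 : ℝ) * 0.9997 ^ n :=
    (summable_geometric_of_lt_one (by norm_num) (by norm_num)).mul_left 2
  refine hgeom.of_nonneg_of_le (fun n => ?_) fun n => ?_
  · exact mul_nonneg (block_one_nonneg _) (by positivity)
  · have hle := firstPassage_one_mul_pow_le n .west 1
    have hpow : (0 : ℝ) ≤ 0.9997 ^ n := by positivity
    rw [block, one_mul, pow_add]
    norm_num [Move.weight] at hle ⊢
    linarith

theorem block_one_values :
    (List.range 14).map (block (1 : ℕ)) = [0, 1, 0, 0, 1, 1, 2, 4, 8, 16, 33, 69, 146, 312] := by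
  decide +kernel

theorem half_lt_tsum_block_one_mul_pow : 1 / 2 < ∑' n, block (1 : ℝ) n * 0.414 ^ n := by
  have hvalues := block_one_values
  simp only [List.range_succ_eq_map, List.range_zero, List.map_nil, List.map_cons,
    List.cons.injEq, Nat.succ_eq_add_one, zero_add, Nat.reduceAdd, and_true] at hvalues
  refine lt_of_lt_of_le ?_ (summable_block_one_mul_pow.sum_le_tsum (Finset.range 14) fun n _ =>
    mul_nonneg (block_one_nonneg n) (by positivity))
  simp only [Finset.sum_range_succ, Finset.sum_range_zero, block_one_eq_natCast, hvalues]
  norm_num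

theorem exists_hasSum_block_one_mul_pow :
    ∃ ρ : ℝ, 0 < ρ ∧ ρ < 0.414 ∧ HasSum (fun n => block (1 : ℝ) n * ρ ^ n) (1 / 2) := by
  have hbound {z : ℝ} (h₀ : 0 ≤ z) (h₁ : z ≤ 0.414) (n : ℕ) :
      block (1 : ℝ) n * z ^ n ≤ block (1 : ℝ) n * 0.414 ^ n := by
    have := block_one_nonneg n
    gcongr
  have hcont : ContinuousOn (fun z : ℝ => ∑' n, block (1 : ℝ) n * z ^ n) (Icc 0 0.414) := by
    refine continuousOn_tsum (fun n => by fun_prop) summable_block_one_mul_pow fun n z hz => ?_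
    rw [Real.norm_of_nonneg (mul_nonneg (block_one_nonneg n) (pow_nonneg hz.1 n))]
    exact hbound hz.1 hz.2 n
  have hzero : ∑' n, block (1 : ℝ) n * 0 ^ n = 0 := by
    rw [tsum_eq_single 0 fun n hn => by simp [hn], block, zero_mul]
  have hmem : (1 / 2 : ℝ) ∈
      Ioo (∑' n, block (1 : ℝ) n * 0 ^ n) (∑' n, block (1 : ℝ) n * 0.414 ^ n) :=
    ⟨by rw [hzero]; norm_num, half_lt_tsum_block_one_mul_pow⟩
  obtain ⟨ρ, ⟨hρ₀, hρ₁⟩, hρ⟩ := intermediate_value_Ioo (by norm_num) hcont hmem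
  refine ⟨ρ, hρ₀, hρ₁, (Summable.hasSum_iff ?_).2 hρ⟩
  exact summable_block_one_mul_pow.of_nonneg_of_le
    (fun n => mul_nonneg (block_one_nonneg n) (pow_nonneg hρ₀.le n)) (hbound hρ₀.le hρ₁.le)

end BlockRadius

end PrudentWalks

section SecondMoment

variable {Ω ι : Type*} [MeasurableSpace Ω] [Fintype ι] {P : Measure Ω} {Y : ι → Ω → ℝ}

/-- The matrix of second moments of a random vector, which is its covariance matrix if the vector is
centered. -/
noncomputable def secondMoment (P : Measure Ω) (Y : ι → Ω → ℝ) : Matrix ι ι ℝ :=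
  .of fun i j => ∫ ω, Y i ω * Y j ω ∂P

theorem memLp_dotProduct (hY : ∀ i, MemLp (Y i) 2 P) (v : ι → ℝ) :
    MemLp (fun ω => v ⬝ᵥ fun i => Y i ω) 2 P :=
  memLp_finsetSum _ fun i _ => (hY i).const_mul (v i)

theorem integral_dotProduct_sq (hY : ∀ i, MemLp (Y i) 2 P) (v : ι → ℝ) :
    ∫ ω, (v ⬝ᵥ fun i => Y i ω) ^ 2 ∂P = v ⬝ᵥ secondMoment P Y *ᵥ v := by
  have hint (i j : ι) : Integrable (fun ω => v i * Y i ω * (v j * Y j ω)) P :=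
    ((hY i).const_mul (v i)).integrable_mul ((hY j).const_mul (v j))
  simp only [dotProduct, sq, Finset.sum_mul_sum]
  rw [integral_finsetSum _ fun i _ => integrable_finsetSum _ fun j _ => hint i j]
  refine Finset.sum_congr rfl fun i _ => ?_
  rw [integral_finsetSum _ fun j _ => hint i j, mulVec, dotProduct, Finset.mul_sum]
  refine Finset.sum_congr rfl fun j _ => ?_
  rw [secondMoment, of_apply, mul_left_comm, ← integral_mul_const]
  exact integral_congr_ae (.of_forall fun ω => by ring)

theorem posDef_secondMoment (hY : ∀ i, MemLp (Y i) 2 P)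
    (hnondeg : ∀ v : ι → ℝ, (∀ᵐ ω ∂P, v ⬝ᵥ (fun i => Y i ω) = 0) → v = 0) :
    (secondMoment P Y).PosDef := by
  refine .of_dotProduct_mulVec_pos ?_ fun v hv => ?_
  · ext i j
    simp only [secondMoment, conjTranspose_apply, of_apply, star_trivial, mul_comm]
  · rw [star_trivial, ← integral_dotProduct_sq hY]
    refine (integral_nonneg fun _ => sq_nonneg _).lt_of_ne fun h => hv (hnondeg v ?_)
    have hsq := (integral_eq_zero_iff_of_nonneg (fun _ => sq_nonneg _)
      (memLp_dotProduct hY v).integrable_sq).1 h.symm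
    filter_upwards [hsq] with ω hω using pow_eq_zero_iff two_ne_zero |>.1 hω

end SecondMoment

section BlockLaw

variable {ρ : ℝ}

theorem hasSum_blockCount_mul_pow (hρ₀ : 0 < ρ)
    (hρ : HasSum (fun n => block (1 : ℝ) n * ρ ^ n) (1 / 2)) :
    HasSum (fun ω : Bool × ℕ × ℕ => ENNReal.ofReal (blockCount ω.2.1 ω.2.2 * ρ ^ ω.2.1)) 1 := by
  have hrow (n : ℕ) : ∑' h, ENNReal.ofReal (blockCount n h * ρ ^ n) =
      ENNReal.ofReal (block (1 : ℝ) n * ρ ^ n) := by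
    rw [block_eq_sum, Finset.sum_mul, ENNReal.ofReal_sum_of_nonneg fun h _ => by positivity]
    simp only [one_pow, mul_one]
    refine tsum_eq_sum fun h hh => ?_
    rw [blockCount_eq_zero (by simpa [Nat.lt_succ_iff] using hh), Nat.cast_zero, zero_mul,
      ENNReal.ofReal_zero]
  have hhalf : ∑' nh : ℕ × ℕ, ENNReal.ofReal (blockCount nh.1 nh.2 * ρ ^ nh.1) =
      ENNReal.ofReal (1 / 2) := by
    rw [ENNReal.tsum_prod (f := fun n h => ENNReal.ofReal (blockCount n h * ρ ^ n)), ← hρ.tsum_eq,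
      ENNReal.ofReal_tsum_of_nonneg (fun n => mul_nonneg (block_one_nonneg n) (pow_nonneg hρ₀.le n))
        hρ.summable]
    exact tsum_congr hrow
  rw [ENNReal.summable.hasSum_iff]
  refine (ENNReal.tsum_prod (f := fun (_ : Bool) (nh : ℕ × ℕ) =>
    ENNReal.ofReal (blockCount nh.1 nh.2 * ρ ^ nh.1))).trans ?_
  rw [tsum_bool, hhalf, ← ENNReal.ofReal_add (by norm_num) (by norm_num), add_halves,
    ENNReal.ofReal_one]

/-- The law of a random block, recorded as `(o, n, h)`: it has `n` steps, `h` of which push the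
border of the visited sites, upwards if `o` is `false` and to the right if `o` is `true`. Each
single block of length `n` has probability `ρ ^ n`. -/
noncomputable def blockLaw (hρ₀ : 0 < ρ)
    (hρ : HasSum (fun n => block (1 : ℝ) n * ρ ^ n) (1 / 2)) : Measure (Bool × ℕ × ℕ) :=
  PMF.toMeasure ⟨_, hasSum_blockCount_mul_pow hρ₀ hρ⟩

variable (hρ₀ : 0 < ρ) (hρ : HasSum (fun n => block (1 : ℝ) n * ρ ^ n) (1 / 2))

instance : IsProbabilityMeasure (blockLaw hρ₀ hρ) :=
  PMF.toMeasure.isProbabilityMeasure _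

theorem measureReal_blockLaw_singleton (ω : Bool × ℕ × ℕ) :
    (blockLaw hρ₀ hρ).real {ω} = blockCount ω.2.1 ω.2.2 * ρ ^ ω.2.1 := by
  have hsingleton : blockLaw hρ₀ hρ {ω} = ENNReal.ofReal (blockCount ω.2.1 ω.2.2 * ρ ^ ω.2.1) :=
    PMF.toMeasure_apply_singleton _ _ (measurableSet_singleton ω)
  rw [measureReal_def, hsingleton, ENNReal.toReal_ofReal (by positivity)]

theorem integral_blockLaw {E : Type*} [NormedAddCommGroup E] [NormedSpace ℝ E] [CompleteSpace E]
    {f : Bool × ℕ × ℕ → E} (hf : Integrable f (blockLaw hρ₀ hρ)) :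
    ∫ ω, f ω ∂blockLaw hρ₀ hρ = ∑' ω, (blockCount ω.2.1 ω.2.2 * ρ ^ ω.2.1) • f ω := by
  simp only [integral_countable hf, measureReal_blockLaw_singleton]

theorem ae_blockLaw_iff {p : Bool × ℕ × ℕ → Prop} :
    (∀ᵐ ω ∂blockLaw hρ₀ hρ, p ω) ↔ ∀ ω, blockCount ω.2.1 ω.2.2 ≠ 0 → p ω := by
  have hatom (ω : Bool × ℕ × ℕ) : blockLaw hρ₀ hρ {ω} ≠ 0 ↔ blockCount ω.2.1 ω.2.2 ≠ 0 := by
    rw [← measureReal_ne_zero_iff, measureReal_blockLaw_singleton, mul_ne_zero_iff_right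
      (pow_ne_zero _ hρ₀.ne'), Nat.cast_ne_zero]
  simp only [ae_iff_of_countable, hatom]

theorem setIntegral_blockLaw (O : Finset Bool) (n : ℕ) {E : Type*} [NormedAddCommGroup E]
    [NormedSpace ℝ E] [CompleteSpace E] {f : Bool × ℕ × ℕ → E} {C : ℝ} (hf : ∀ ω, ‖f ω‖ ≤ C) :
    ∫ ω in {ω | ω.2.1 = n ∧ ω.1 ∈ O}, f ω ∂blockLaw hρ₀ hρ =
      ∑ o ∈ O, ∑ h ∈ Finset.range (n + 1), (blockCount n h * ρ ^ n) • f (o, n, h) := by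
  classical
  have hint : Integrable f (blockLaw hρ₀ hρ) := .of_bound (by fun_prop) C (.of_forall hf)
  have hmeas : MeasurableSet {ω : Bool × ℕ × ℕ | ω.2.1 = n ∧ ω.1 ∈ O} := .of_discrete
  rw [← integral_indicator hmeas, integral_blockLaw hρ₀ hρ (hint.indicator hmeas),
    tsum_eq_sum (s := O ×ˢ {n} ×ˢ Finset.range (n + 1)), Finset.sum_product]
  · simp only [Finset.sum_product, Finset.sum_singleton]
    refine Finset.sum_congr rfl fun o ho => Finset.sum_congr rfl fun h _ => ?_
    rw [indicator_of_mem (show (o, n, h) ∈ {ω : Bool × ℕ × ℕ | ω.2.1 = n ∧ ω.1 ∈ O} from ⟨rfl, ho⟩)]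
  · rintro ⟨o, n', h⟩ hω
    by_cases hmem : n' = n ∧ o ∈ O
    · have hlt : n' < h := by
        simpa [hmem.1, hmem.2, Nat.lt_succ_iff] using hω
      simp [blockCount_eq_zero hlt]
    · rw [indicator_of_notMem (s := {ω : Bool × ℕ × ℕ | ω.2.1 = n ∧ ω.1 ∈ O}) hmem, smul_zero]

theorem measureReal_blockLaw_length (n : ℕ) :
    (blockLaw hρ₀ hρ).real ((fun ω => ω.2.1) ⁻¹' {n}) = 2 * (block (1 : ℝ) n * ρ ^ n) := by
  have hset := setIntegral_blockLaw hρ₀ hρ Finset.univ n (f := fun _ => (1 : ℝ)) (C := 1) (by simp)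
  change (blockLaw hρ₀ hρ).real {ω | ω.2.1 = n} = _
  simpa [block_eq_sum, Finset.sum_mul, two_mul] using hset

theorem integrable_pow_length_blockLaw :
    Integrable (fun ω : Bool × ℕ × ℕ => (0.414 / ρ) ^ ω.2.1) (blockLaw hρ₀ hρ) := by
  refine integrable_comp_of_summable_fiber .of_discrete ?_
  simp only [measureReal_blockLaw_length]
  refine (summable_block_one_mul_pow.mul_left 2).congr fun n => ?_
  rw [Real.norm_of_nonneg (by positivity), div_pow]
  have := pow_pos hρ₀ n
  field_simp

/-- The displacement, along coordinate `i`, of the corner of the visited sites during a block. -/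
def blockShift (i : Fin 2) (ω : Bool × ℕ × ℕ) : ℕ :=
  if ω.1 = (i = 0 : Bool) then ω.2.2 else 0

theorem blockShift_le_length (i : Fin 2) :
    ∀ᵐ ω ∂blockLaw hρ₀ hρ, blockShift i ω ≤ ω.2.1 := by
  rw [ae_blockLaw_iff]
  rintro ⟨o, n, h⟩ hω
  have hle : h ≤ n := not_lt.1 fun hnh => hω (blockCount_eq_zero hnh)
  unfold blockShift
  split_ifs
  exacts [hle, n.zero_le]

theorem integral_blockShift_eq (i : Fin 2)
    (hint : ∀ i, Integrable (fun ω => (blockShift i ω : ℝ)) (blockLaw hρ₀ hρ)) :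
    ∫ ω, (blockShift i ω : ℝ) ∂blockLaw hρ₀ hρ = ∫ ω, (blockShift 0 ω : ℝ) ∂blockLaw hρ₀ hρ := by
  fin_cases i
  · rfl
  · rw [integral_blockLaw hρ₀ hρ (hint _), integral_blockLaw hρ₀ hρ (hint _),
      ← (Equiv.boolNot.prodCongr (.refl _)).tsum_eq]
    refine tsum_congr fun ⟨o, n, h⟩ => ?_
    cases o <;> simp [blockShift]

/-- The expected number of steps of a block. -/
noncomputable def meanLength : ℝ :=
  ∫ ω, (ω.2.1 : ℝ) ∂blockLaw hρ₀ hρ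

/-- The limiting speed of the walk along each axis. -/
noncomputable def speed : ℝ :=
  (∫ ω, (blockShift 0 ω : ℝ) ∂blockLaw hρ₀ hρ) / meanLength hρ₀ hρ

/-- The deviation of the displacement during a block from the limiting speed. -/
noncomputable def blockDeviation (i : Fin 2) (ω : Bool × ℕ × ℕ) : ℝ :=
  blockShift i ω - speed hρ₀ hρ * ω.2.1

/-- The covariance matrix of the limiting law: a walk of length `L` consists of about
`L / meanLength` blocks. -/
noncomputable def limitCovariance : Matrix (Fin 2) (Fin 2) ℝ :=
  (meanLength hρ₀ hρ)⁻¹ • secondMoment (blockLaw hρ₀ hρ) (blockDeviation hρ₀ hρ)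

theorem measureReal_blockLaw_ne_zero {A : Set (Bool × ℕ × ℕ)} {ω : Bool × ℕ × ℕ} (hωA : ω ∈ A)
    (hω : blockCount ω.2.1 ω.2.2 ≠ 0) : (blockLaw hρ₀ hρ).real A ≠ 0 := by
  refine ne_of_gt (lt_of_lt_of_le ?_ (measureReal_mono (singleton_subset_iff.2 hωA)))
  rw [measureReal_blockLaw_singleton]
  have := pow_pos hρ₀ ω.2.1
  positivity

theorem integral_blockLaw_pos {f : Bool × ℕ × ℕ → ℝ} (hf : 0 ≤ f)
    (hint : Integrable f (blockLaw hρ₀ hρ)) {ω : Bool × ℕ × ℕ}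
    (hω : blockCount ω.2.1 ω.2.2 ≠ 0) (hfω : f ω ≠ 0) : 0 < ∫ ω, f ω ∂blockLaw hρ₀ hρ :=
  (integral_nonneg hf).lt_of_ne fun h =>
    hfω ((ae_blockLaw_iff hρ₀ hρ).1 ((integral_eq_zero_iff_of_nonneg hf hint).1 h.symm) ω hω)

theorem dotProduct_blockDeviation (v : Fin 2 → ℝ) (o : Bool) (n h : ℕ) :
    (v ⬝ᵥ fun i => blockDeviation hρ₀ hρ i (o, n, h)) =
      v (if o then 0 else 1) * h - speed hρ₀ hρ * n * (v 0 + v 1) := by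
  cases o <;>
    simp only [dotProduct, blockDeviation, blockShift, Fin.sum_univ_two, Fin.isValue,
      true_eq_decide_iff, false_eq_decide_iff, one_ne_zero, not_true_eq_false, not_false_eq_true,
      Bool.false_eq_true, if_true, if_false, Nat.cast_zero] <;>
    ring

theorem eq_zero_of_dotProduct_blockDeviation {v : Fin 2 → ℝ}
    (hv : ∀ᵐ ω ∂blockLaw hρ₀ hρ, v ⬝ᵥ (fun i => blockDeviation hρ₀ hρ i ω) = 0) : v = 0 := by
  rw [ae_blockLaw_iff] at hv
  have hright := hv (true, 1, 1) (by simp [blockCount_one_one])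
  have hup := hv (false, 1, 1) (by simp [blockCount_one_one])
  have hlong := hv (true, 4, 2) (by simp [blockCount_four_two])
  simp only [dotProduct_blockDeviation, if_true, Bool.false_eq_true, if_false, Nat.cast_one,
    Nat.cast_ofNat] at hright hup hlong
  ext i
  fin_cases i
  · change v 0 = 0
    linarith
  · change v 1 = 0
    linarith

theorem stepTransform_blockLaw (O : Finset Bool) (v : Fin 2 → ℝ) (r : ℝ) (n : ℕ) :
    stepTransform ((blockLaw hρ₀ hρ).restrict {ω | ω.1 ∈ O}) (fun ω => ω.2.1)
        (fun ω => v ⬝ᵥ fun i => blockDeviation hρ₀ hρ i ω) r n =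
      (∑ o ∈ O, block (Complex.exp (r * v (if o then 0 else 1) * Complex.I)) n) *
        (ρ * Complex.exp (-(r * speed hρ₀ hρ * (v 0 + v 1)) * Complex.I)) ^ n := by
  rw [stepTransform, Measure.restrict_restrict .of_discrete]
  refine (setIntegral_blockLaw hρ₀ hρ O n fun ω => (norm_cexp_mul_mul_I r _).le).trans ?_
  rw [Finset.sum_mul]
  refine Finset.sum_congr rfl fun o _ => ?_
  rw [block_eq_sum, Finset.sum_mul]
  refine Finset.sum_congr rfl fun h _ => ?_
  have hexponent : r * (v ⬝ᵥ fun i => blockDeviation hρ₀ hρ i (o, n, h) : ℝ) * Complex.I =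
      h * (r * v (if o then 0 else 1) * Complex.I) +
        n * (-(r * speed hρ₀ hρ * (v 0 + v 1)) * Complex.I) := by
    rw [dotProduct_blockDeviation]
    push_cast
    ring
  rw [hexponent, Complex.exp_add, Complex.exp_nat_mul, Complex.exp_nat_mul, Complex.real_smul]
  push_cast
  ring

theorem isRenewalSeq_stepTransform_blockLaw (v : Fin 2 → ℝ) (r : ℝ) :
    IsRenewalSeq (stepTransform (blockLaw hρ₀ hρ) (fun ω => ω.2.1)
        (fun ω => v ⬝ᵥ fun i => blockDeviation hρ₀ hρ i ω) r)
      fun n => completionSum n .east 0 (Complex.exp (r * v 0 * Complex.I))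
          (Complex.exp (r * v 1 * Complex.I)) *
        (ρ * Complex.exp (-(r * speed hρ₀ hρ * (v 0 + v 1)) * Complex.I)) ^ n := by
  convert (isRenewalSeq_completionSum _ _).mul_pow _ using 2 with n
  simpa using stepTransform_blockLaw hρ₀ hρ Finset.univ v r n

theorem sum_stepTransform_mul_completionSum (v : Fin 2 → ℝ) (r : ℝ) (n : ℕ) :
    ∑ k ∈ Finset.range (n + 1 + 1),
      stepTransform ((blockLaw hρ₀ hρ).restrict {ω | ω.1 = true}) (fun ω => ω.2.1)
        (fun ω => v ⬝ᵥ fun i => blockDeviation hρ₀ hρ i ω) r k *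
      (completionSum (n + 1 - k) .east 0 (Complex.exp (r * v 0 * Complex.I))
          (Complex.exp (r * v 1 * Complex.I)) *
        (ρ * Complex.exp (-(r * speed hρ₀ hρ * (v 0 + v 1)) * Complex.I)) ^ (n + 1 - k)) =
    ρ ^ (n + 1) * ∑ᶠ π ∈ twoSidedSet (n + 1),
      Complex.exp (r * (v 0 * ((π (Fin.last (n + 1))).1 - speed hρ₀ hρ * (n + 1 : ℕ)) +
        v 1 * ((π (Fin.last (n + 1))).2 - speed hρ₀ hρ * (n + 1 : ℕ))) * Complex.I) := by
  set x := Complex.exp (r * v 0 * Complex.I)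
  set y := Complex.exp (r * v 1 * Complex.I)
  set z := Complex.exp (-(r * speed hρ₀ hρ * (v 0 + v 1)) * Complex.I)
  have hright (k : ℕ) : stepTransform ((blockLaw hρ₀ hρ).restrict {ω | ω.1 = true})
      (fun ω => ω.2.1) (fun ω => v ⬝ᵥ fun i => blockDeviation hρ₀ hρ i ω) r k =
      block x k * (ρ * z) ^ k := by
    simpa only [Finset.mem_singleton, Finset.sum_singleton, if_true] using
      stepTransform_blockLaw hρ₀ hρ {true} v r k
  have hexp (p : ℤ × ℤ) : Complex.exp (r * (v 0 * (p.1 - speed hρ₀ hρ * (n + 1 : ℕ)) +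
      v 1 * (p.2 - speed hρ₀ hρ * (n + 1 : ℕ))) * Complex.I) =
      z ^ (n + 1) * (x ^ p.1 * y ^ p.2) := by
    rw [← Complex.exp_int_mul, ← Complex.exp_int_mul, ← Complex.exp_nat_mul, ← Complex.exp_add,
      ← Complex.exp_add]
    congr 1
    ring
  simp only [hexp, hright]
  rw [← mul_finsum_mem, sum_twoSidedSet_eq_sum_block n
    (Complex.exp_ne_zero _) (Complex.exp_ne_zero _), ← mul_assoc, ← mul_pow, Finset.mul_sum,
    Finset.sum_range_succ', block, zero_mul, zero_mul, add_zero]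
  refine Finset.sum_congr rfl fun k hk => ?_
  have hkn : k ≤ n := Nat.lt_succ_iff.1 (Finset.mem_range.1 hk)
  rw [Nat.add_sub_add_right, show n + 1 = k + 1 + (n - k) by omega, pow_add _ (k + 1) (n - k)]
  ring

variable (hρ₁ : ρ < 0.414)
include hρ₁

theorem memLp_length : MemLp (fun ω : Bool × ℕ × ℕ => (ω.2.1 : ℝ)) 2 (blockLaw hρ₀ hρ) :=
  memLp_two_of_integrable_pow .of_discrete ((one_lt_div hρ₀).2 hρ₁)
    (integrable_pow_length_blockLaw hρ₀ hρ)

theorem memLp_blockShift (i : Fin 2) :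
    MemLp (fun ω => (blockShift i ω : ℝ)) 2 (blockLaw hρ₀ hρ) := by
  refine (memLp_length hρ₀ hρ hρ₁).of_le (by fun_prop) ?_
  filter_upwards [blockShift_le_length hρ₀ hρ i] with ω hω
  simpa only [Real.norm_natCast, Nat.cast_le] using hω

theorem memLp_blockDeviation (i : Fin 2) :
    MemLp (blockDeviation hρ₀ hρ i) 2 (blockLaw hρ₀ hρ) :=
  (memLp_blockShift hρ₀ hρ hρ₁ i).sub ((memLp_length hρ₀ hρ hρ₁).const_mul _)

theorem meanLength_pos : 0 < meanLength hρ₀ hρ :=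
  integral_blockLaw_pos hρ₀ hρ (fun ω => Nat.cast_nonneg _)
    ((memLp_length hρ₀ hρ hρ₁).integrable one_le_two) (ω := (true, 1, 1))
    (by simp [blockCount_one_one]) (by simp)

theorem speed_pos : 0 < speed hρ₀ hρ := by
  refine div_pos (integral_blockLaw_pos hρ₀ hρ (fun ω => Nat.cast_nonneg _)
    ((memLp_blockShift hρ₀ hρ hρ₁ 0).integrable one_le_two) (ω := (true, 1, 1)) ?_ ?_)
    (meanLength_pos hρ₀ hρ hρ₁)
  · simp [blockCount_one_one]
  · simp [blockShift]

theorem integral_blockDeviation (i : Fin 2) :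
    ∫ ω, blockDeviation hρ₀ hρ i ω ∂blockLaw hρ₀ hρ = 0 := by
  have hint (i : Fin 2) := (memLp_blockShift hρ₀ hρ hρ₁ i).integrable one_le_two
  have hlen := (memLp_length hρ₀ hρ hρ₁).integrable one_le_two
  simp only [blockDeviation]
  rw [integral_sub (hint i) (hlen.const_mul _), integral_const_mul,
    integral_blockShift_eq hρ₀ hρ i hint, speed, ← meanLength,
    div_mul_cancel₀ _ (meanLength_pos hρ₀ hρ hρ₁).ne', sub_self]

theorem posDef_limitCovariance : (limitCovariance hρ₀ hρ).PosDef :=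
  (posDef_secondMoment (memLp_blockDeviation hρ₀ hρ hρ₁) fun _ =>
    eq_zero_of_dotProduct_blockDeviation hρ₀ hρ).smul (inv_pos.2 (meanLength_pos hρ₀ hρ hρ₁))

open Topology in
theorem tendsto_sum_twoSidedSet (v : Fin 2 → ℝ) :
    Tendsto (fun n : ℕ => ρ ^ (n + 1) * ∑ᶠ π ∈ twoSidedSet (n + 1),
      Complex.exp ((√(n + 1 : ℕ))⁻¹ *
        (v 0 * ((π (Fin.last (n + 1))).1 - speed hρ₀ hρ * (n + 1 : ℕ)) +
        v 1 * ((π (Fin.last (n + 1))).2 - speed hρ₀ hρ * (n + 1 : ℕ))) * Complex.I)) atTop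
      (𝓝 ((blockLaw hρ₀ hρ).real {ω | ω.1 = true} *
        (Real.exp (-(v ⬝ᵥ limitCovariance hρ₀ hρ *ᵥ v) / 2) / meanLength hρ₀ hρ : ℝ))) := by
  have hY := memLp_blockDeviation hρ₀ hρ hρ₁
  have hX₀ : ∫ ω, (v ⬝ᵥ fun i => blockDeviation hρ₀ hρ i ω) ∂blockLaw hρ₀ hρ = 0 := by
    simp only [dotProduct]
    rw [integral_finsetSum _ fun i _ => ((hY i).integrable one_le_two).const_mul _]
    simp only [integral_const_mul, integral_blockDeviation hρ₀ hρ hρ₁, mul_zero,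
      Finset.sum_const_zero]
  have hlimit := tendsto_sum_stepTransform_mul_renewalSeq
    (τ := fun ω : Bool × ℕ × ℕ => ω.2.1) .of_discrete
    (by rw [measureReal_blockLaw_length, block, zero_mul, mul_zero])
    (measureReal_blockLaw_ne_zero hρ₀ hρ (ω := (true, 1, 1)) rfl (by simp [blockCount_one_one]))
    ((one_lt_div hρ₀).2 hρ₁) (integrable_pow_length_blockLaw hρ₀ hρ) (memLp_dotProduct hY v) hX₀
    {ω | ω.1 = true} fun L => isRenewalSeq_stepTransform_blockLaw hρ₀ hρ v (√L)⁻¹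
  have hvariance : -(v ⬝ᵥ limitCovariance hρ₀ hρ *ᵥ v) / 2 =
      -((∫ ω, (v ⬝ᵥ fun i => blockDeviation hρ₀ hρ i ω) ^ 2 ∂blockLaw hρ₀ hρ) / 2) /
        meanLength hρ₀ hρ := by
    rw [integral_dotProduct_sq hY, limitCovariance, smul_mulVec, dotProduct_smul, smul_eq_mul]
    ring
  rw [hvariance]
  exact (hlimit.comp (tendsto_add_atTop_nat 1)).congr fun n =>
    sum_stepTransform_mul_completionSum hρ₀ hρ v _ n

end BlockLaw

section EndpointFluctuation

open Topology

variable {ρ : ℝ}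

theorem rescaled_one (L : ℕ) (π : Fin (L + 1) → ℤ × ℤ) :
    rescaled L π 1 = (L : ℝ)⁻¹ • toR (π (Fin.last L)) := by
  simp [rescaled, Fin.last]

/-- The rescaled deviation of the endpoint of a path from `c * L` times the diagonal direction. -/
noncomputable def endpointDeviation (c : ℝ) (L : ℕ) (π : Fin (L + 1) → ℤ × ℤ) : ℝ × ℝ :=
  √L • (rescaled L π 1 - c • evec 1)

theorem endpointDeviation_eq (c : ℝ) (L : ℕ) (π : Fin (L + 1) → ℤ × ℤ) :
    endpointDeviation c L π =
      ((√L)⁻¹ * ((π (Fin.last L)).1 - c * L), (√L)⁻¹ * ((π (Fin.last L)).2 - c * L)) := by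
  have hinv : √(L : ℝ) * (L : ℝ)⁻¹ = (√L)⁻¹ := by
    rw [← div_eq_mul_inv, Real.sqrt_div_self]
  have hmul : (√(L : ℝ))⁻¹ * L = √L := by rw [← div_eq_inv_mul, Real.div_sqrt]
  rw [endpointDeviation, rescaled_one]
  ext <;> simp only [evec, toR, Prod.smul_fst, Prod.smul_snd, Prod.fst_sub, Prod.snd_sub,
    smul_eq_mul]
  · linear_combination ((π (Fin.last L)).1 : ℝ) * hinv + c * hmul
  · linear_combination ((π (Fin.last L)).2 : ℝ) * hinv + c * hmul

theorem expUnifPlus_succ (n : ℕ) (g : (Fin (n + 1 + 1) → ℤ × ℤ) → ℝ) :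
    expUnifPlus (n + 1) g = (∑ π ∈ (finite_twoSidedSet n).toFinset, g π) /
      (finite_twoSidedSet n).toFinset.card := by
  rw [expUnifPlus, finsum_mem_eq_finite_toFinset_sum _ (finite_twoSidedSet n),
    Nat.card_eq_card_finite_toFinset]

variable (hρ₀ : 0 < ρ) (hρ : HasSum (fun n => block (1 : ℝ) n * ρ ^ n) (1 / 2)) (hρ₁ : ρ < 0.414)
include hρ₁

theorem tendsto_sum_cexp_endpointDeviation (v : Fin 2 → ℝ) :
    Tendsto (fun n : ℕ => ρ ^ (n + 1) * ∑ π ∈ (finite_twoSidedSet n).toFinset,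
      Complex.exp ((v 0 * (endpointDeviation (speed hρ₀ hρ) (n + 1) π).1 +
        v 1 * (endpointDeviation (speed hρ₀ hρ) (n + 1) π).2 : ℝ) * Complex.I)) atTop
      (𝓝 ((blockLaw hρ₀ hρ).real {ω | ω.1 = true} *
        (Real.exp (-(v ⬝ᵥ limitCovariance hρ₀ hρ *ᵥ v) / 2) / meanLength hρ₀ hρ : ℝ))) := by
  refine (tendsto_sum_twoSidedSet hρ₀ hρ hρ₁ v).congr fun n => ?_
  rw [finsum_mem_eq_finite_toFinset_sum _ (finite_twoSidedSet n)]
  refine congrArg _ (Finset.sum_congr rfl fun π _ => ?_)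
  rw [endpointDeviation_eq]
  push_cast
  ring_nf

theorem tendsto_average_cexp_endpointDeviation (s t : ℝ) :
    Tendsto (fun n : ℕ => (∑ π ∈ (finite_twoSidedSet n).toFinset,
      Complex.exp ((s * (endpointDeviation (speed hρ₀ hρ) (n + 1) π).1 +
        t * (endpointDeviation (speed hρ₀ hρ) (n + 1) π).2 : ℝ) * Complex.I)) /
      (finite_twoSidedSet n).toFinset.card) atTop
      (𝓝 (Complex.exp (-(![s, t] ⬝ᵥ limitCovariance hρ₀ hρ *ᵥ ![s, t] : ℝ) / 2))) := by
  have hμ := (meanLength_pos hρ₀ hρ hρ₁).ne'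
  have hβ : (blockLaw hρ₀ hρ).real {ω | ω.1 = true} ≠ 0 :=
    measureReal_blockLaw_ne_zero hρ₀ hρ (ω := (true, 1, 1)) rfl (by simp [blockCount_one_one])
  have hcard : Tendsto (fun n : ℕ => (ρ ^ (n + 1) * (finite_twoSidedSet n).toFinset.card : ℂ)) atTop
      (𝓝 ((blockLaw hρ₀ hρ).real {ω | ω.1 = true} * (1 / meanLength hρ₀ hρ : ℝ))) := by
    simpa using tendsto_sum_cexp_endpointDeviation hρ₀ hρ hρ₁ 0
  have hne : ((blockLaw hρ₀ hρ).real {ω | ω.1 = true} * (1 / meanLength hρ₀ hρ : ℝ) : ℂ) ≠ 0 := by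
    simp [hβ, hμ]
  have hratio := (tendsto_sum_cexp_endpointDeviation hρ₀ hρ hρ₁ ![s, t]).div hcard hne
  have hρpow (n : ℕ) : (ρ : ℂ) ^ (n + 1) ≠ 0 := pow_ne_zero _ (Complex.ofReal_ne_zero.2 hρ₀.ne')
  have hlim := hratio.congr fun n => mul_div_mul_left _ _ (hρpow n)
  rw [mul_div_mul_left _ _ (Complex.ofReal_ne_zero.2 hβ), ← Complex.ofReal_div,
    div_div_div_cancel_right₀ hμ, div_one] at hlim
  simpa using hlim

end EndpointFluctuation

/-- **Endpoint CLT for the 2-sided walk.** There are a constant `c > 0` and a symmetric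
positive-definite covariance matrix `Σ` such that under `P^+_{unif,L}`, the law of
`√L(π̃^L_1 − c e⃗₁)` converges weakly to `N(0,Σ)`. -/
theorem two_sided_prudent_endpoint_clt :
    ∃ c : ℝ, 0 < c ∧ ∃ S : Matrix (Fin 2) (Fin 2) ℝ, S.IsSymm ∧ S.PosDef ∧
      ∀ f : ℝ × ℝ → ℝ, Continuous f → (∃ M : ℝ, ∀ x, |f x| ≤ M) →
        Tendsto (fun L : ℕ =>
            expUnifPlus L (fun π => f (Real.sqrt L • (rescaled L π 1 - c • evec 1))))
          atTop (nhds (∫ x : ℝ × ℝ, f x * gaussDensity2 S x)) := by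
  obtain ⟨ρ, hρ₀, hρ₁, hρ⟩ := exists_hasSum_block_one_mul_pow
  have hS := posDef_limitCovariance hρ₀ hρ hρ₁
  refine ⟨speed hρ₀ hρ, speed_pos hρ₀ hρ hρ₁, limitCovariance hρ₀ hρ,
    isHermitian_iff_isSymm.1 hS.isHermitian, hS,
    fun f hf ⟨M, hM⟩ => (tendsto_add_atTop_iff_nat 1).1 ?_⟩
  simp only [expUnifPlus_succ]
  exact tendsto_average_gaussDensity2 hS (tendsto_average_cexp_endpointDeviation hρ₀ hρ hρ₁) hf hM
end

section
/- There exists λ* > 0 such that Σ_{t=1}^∞ 2^{−t} |I_t| e^{−λ* t} = 1; i.e. the generating function K̂(λ) = Σ_{t≥1} K(t) e^{−λt} of K(t) := 2^{−t}|I_t| takes the value 1 at some positive λ*. -/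
/-- The set `I_t` of horizontal excursions of length `t`: self-avoiding `t`-step paths in
`ℤ²` starting `(0,0) → (1,0)`, with steps east, north or south, staying in the upper
half-plane and ending on the `x`-axis. -/
def excSet (t : ℕ) : Set (Fin (t + 1) → ℤ × ℤ) :=
  {π | π 0 = (0, 0) ∧ (∀ _h : 0 < t, π ⟨1, by omega⟩ = (1, 0)) ∧
    (∀ i : Fin t,
      π i.succ - π i.castSucc = (1, 0) ∨ π i.succ - π i.castSucc = (0, 1) ∨
        π i.succ - π i.castSucc = (0, -1)) ∧
    Function.Injective π ∧
    (∀ i : Fin (t + 1), 0 ≤ (π i).2) ∧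
    (π (Fin.last t)).2 = 0}

/-!
Cut an excursion after each step. The number of ways to complete it depends only on the last step
`d` and the current height `h`, since a partially directed path is self-avoiding as soon as no
vertical step is immediately reversed. These counts obey a transfer recursion, which reads
`V d h = [h = 0] + z * ∑ V e (h + e)` for their generating series in `z`, summed over the allowed
next steps `e`. When `2z + 2z² - 2z³ = 1`, the recursion has the explicit solution
`V d h = c d * (2z) ^ h` with `c 0 = z⁻¹`. Such a `z` exists below `√2 - 1`, the reciprocal of the
growth rate of partially directed paths, where the remainders of the recursion tend to `0`, so that
the series really sum to `V`. For paths starting with an east step at height `0` the sum is `z⁻¹`,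
that is `∑ z ^ t * |I_t| = 1`, and `λ* = -log (2z)` is positive because `2z < 1`.
-/

open Finset Filter Topology

section
variable {σ ι : Type*} {S : Set σ} {moves : σ → Finset ι} {next : σ → ι → σ} {N : ℕ → σ → ℝ}
  {V W : σ → ℝ} {z κ : ℝ} {s : σ}

theorem sub_sum_range_succ_pow_mul_of_transfer (n : ℕ)
    (hN : ∀ k, N (k + 1) s = ∑ i ∈ moves s, N k (next s i))
    (hV : V s = N 0 s + z * ∑ i ∈ moves s, V (next s i)) :
    V s - ∑ k ∈ range (n + 1), z ^ k * N k s =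
      z * ∑ i ∈ moves s, (V (next s i) - ∑ k ∈ range n, z ^ k * N k (next s i)) := by
  have hsucc (k : ℕ) : z ^ (k + 1) * N (k + 1) s =
      z * ∑ i ∈ moves s, z ^ k * N k (next s i) := by
    rw [hN, ← mul_sum]
    ring
  rw [sum_range_succ', sum_congr rfl fun k _ => hsucc k, ← mul_sum, sum_comm, hV,
    sum_sub_distrib]
  ring

theorem abs_sub_sum_range_pow_mul_le_of_transfer (hS : ∀ s ∈ S, ∀ i ∈ moves s, next s i ∈ S)
    (hN : ∀ n, ∀ s ∈ S, N (n + 1) s = ∑ i ∈ moves s, N n (next s i))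
    (hV : ∀ s ∈ S, V s = N 0 s + z * ∑ i ∈ moves s, V (next s i))
    (hW : ∀ s ∈ S, ∑ i ∈ moves s, W (next s i) ≤ κ * W s)
    (hVW : ∀ s ∈ S, |V s| ≤ W s) (hz : 0 ≤ z) (hκ : 0 ≤ κ) (n : ℕ) (hs : s ∈ S) :
    |V s - ∑ k ∈ range n, z ^ k * N k s| ≤ (z * κ) ^ n * W s := by
  induction n generalizing s with
  | zero => simpa using hVW s hs
  | succ n ih =>
    calc |V s - ∑ k ∈ range (n + 1), z ^ k * N k s|
        ≤ z * ∑ i ∈ moves s, |V (next s i) - ∑ k ∈ range n, z ^ k * N k (next s i)| := by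
          rw [sub_sum_range_succ_pow_mul_of_transfer n (fun k => hN k s hs) (hV s hs), abs_mul,
            abs_of_nonneg hz]
          gcongr
          exact abs_sum_le_sum_abs _ _
      _ ≤ z * ∑ i ∈ moves s, (z * κ) ^ n * W (next s i) := by
          gcongr with i hi
          exact ih (hS s hs i hi)
      _ ≤ z * ((z * κ) ^ n * (κ * W s)) := by
          rw [← mul_sum]
          gcongr
          exact hW s hs
      _ = (z * κ) ^ (n + 1) * W s := by ring

theorem hasSum_pow_mul_of_transfer (hS : ∀ s ∈ S, ∀ i ∈ moves s, next s i ∈ S)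
    (hN_nonneg : ∀ n, 0 ≤ N n s)
    (hN : ∀ n, ∀ s ∈ S, N (n + 1) s = ∑ i ∈ moves s, N n (next s i))
    (hV : ∀ s ∈ S, V s = N 0 s + z * ∑ i ∈ moves s, V (next s i))
    (hW : ∀ s ∈ S, ∑ i ∈ moves s, W (next s i) ≤ κ * W s)
    (hVW : ∀ s ∈ S, |V s| ≤ W s) (hz : 0 ≤ z) (hκ : 0 ≤ κ) (hzκ : z * κ < 1) (hs : s ∈ S) :
    HasSum (fun n => z ^ n * N n s) (V s) := by
  rw [hasSum_iff_tendsto_nat_of_nonneg fun n => mul_nonneg (pow_nonneg hz n) (hN_nonneg n),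
    tendsto_iff_dist_tendsto_zero]
  have hgeom : Tendsto (fun n => (z * κ) ^ n * W s) atTop (𝓝 0) := by
    simpa using (tendsto_pow_atTop_nhds_zero_of_lt_one (mul_nonneg hz hκ) hzκ).mul_const (W s)
  refine squeeze_zero (fun _ => dist_nonneg) (fun n => ?_) hgeom
  rw [dist_comm, Real.dist_eq]
  exact abs_sub_sum_range_pow_mul_le_of_transfer hS hN hV hW hVW hz hκ n hs

end

/-- The displacement of a step of a partially directed path, the step being encoded by its vertical
component: `0` is the east step, `1` the north step and `-1` the south step. -/
def stepVec (e : SignType) : ℤ × ℤ := (if e = 0 then 1 else 0, e)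

theorem stepVec_injective : Function.Injective stepVec := by
  intro d e h
  rcases d.trichotomy with rfl | rfl | rfl <;> rcases e.trichotomy with rfl | rfl | rfl <;>
    simp_all [stepVec]

theorem stepVec_ne_zero (d : SignType) : stepVec d ≠ 0 := by
  rcases d.trichotomy with rfl | rfl | rfl <;> simp [stepVec]

theorem stepVec_eq_neg_of_mul_eq_neg_one {d e : SignType} (h : d * e = -1) :
    stepVec e = -stepVec d := by
  rcases d.trichotomy with rfl | rfl | rfl <;> rcases e.trichotomy with rfl | rfl | rfl <;>
    simp_all [stepVec]

/-- `q` lies in the region that a partially directed path can still visit from `p` when it has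
reached `p` by the step `d`: strictly to the east of `p`, or in the column of `p` on the side
pointed to by `d` (the whole column if `d` is the east step). -/
def Ahead (d : SignType) (p q : ℤ × ℤ) : Prop :=
  p.1 < q.1 ∨ q.1 = p.1 ∧ 0 ≤ d * (q.2 - p.2)

theorem Ahead.refl (d : SignType) (p : ℤ × ℤ) : Ahead d p p := by
  simp [Ahead]

theorem Ahead.of_add_stepVec {d e : SignType} {p q : ℤ × ℤ} (hde : d * e ≠ -1)
    (h : Ahead e (p + stepVec e) q) : Ahead d p q := by
  rcases d.trichotomy with rfl | rfl | rfl <;> rcases e.trichotomy with rfl | rfl | rfl <;>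
    simp [Ahead, stepVec] at h hde ⊢ <;> omega

theorem not_ahead_sub_stepVec {d e : SignType} (p : ℤ × ℤ) (hde : d * e ≠ -1) :
    ¬Ahead e (p + stepVec e) (p - stepVec d) := by
  intro h
  rcases d.trichotomy with rfl | rfl | rfl <;> rcases e.trichotomy with rfl | rfl | rfl <;>
    simp [Ahead, stepVec] at h hde <;> omega

/-- The possible last `n` steps of a horizontal excursion that has just reached `p` by the step `d`.
Self-avoidance is only required from the vertex `p - stepVec d` onwards: the earlier part of the
excursion is never met again. -/
def excursionTails (p : ℤ × ℤ) (d : SignType) (n : ℕ) : Set (Fin (n + 1) → ℤ × ℤ) :=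
  {π | π 0 = p ∧ (∀ i : Fin n, ∃ e, π i.succ = π i.castSucc + stepVec e) ∧
    Function.Injective (Fin.cons (p - stepVec d) π : Fin (n + 2) → ℤ × ℤ) ∧
    (∀ i, 0 ≤ (π i).2) ∧ (π (Fin.last n)).2 = 0}

/-- The steps that may follow a step `d` ending at height `h`: a vertical step is not immediately
reversed (`d * e ≠ -1`) and the path does not go below height `0`. -/
def nextSteps (d : SignType) (h : ℤ) : Finset SignType := {e | d * e ≠ -1 ∧ 0 ≤ h + e}

theorem nextSteps_of_pos (d : SignType) {h : ℤ} (hh : 0 < h) :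
    nextSteps d h = ({e | d * e ≠ -1} : Finset SignType) := by
  refine filter_congr fun e _ => and_iff_left ?_
  rcases e.trichotomy with rfl | rfl | rfl <;> simp <;> omega

section
variable {p : ℤ × ℤ} {d : SignType} {n : ℕ}

theorem exists_nextSteps_tail_mem {π : Fin (n + 2) → ℤ × ℤ} (hπ : π ∈ excursionTails p d (n + 1)) :
    ∃ e ∈ nextSteps d p.2, Fin.tail π ∈ excursionTails (p + stepVec e) e n := by
  obtain ⟨rfl, hstep, hinj, hnonneg, hend⟩ := hπ
  obtain ⟨e, he⟩ := hstep 0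
  have he1 : π 1 = π 0 + stepVec e := he
  obtain ⟨hprev, hinj⟩ := Fin.cons_injective_iff.1 hinj
  refine ⟨e, ?_, he, fun i => hstep i.succ, ?_, fun i => hnonneg i.succ, hend⟩
  · refine mem_filter.2 ⟨mem_univ e, fun hde => hprev ⟨1, ?_⟩, ?_⟩
    · rw [he1, stepVec_eq_neg_of_mul_eq_neg_one hde, sub_eq_add_neg]
    · simpa [he1, stepVec] using hnonneg 1
  · rwa [add_sub_cancel_right, Fin.cons_self_tail]

theorem ahead_of_mem_excursionTails {π : Fin (n + 1) → ℤ × ℤ} (hπ : π ∈ excursionTails p d n)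
    (i : Fin (n + 1)) : Ahead d p (π i) := by
  induction n generalizing p d with
  | zero =>
    rw [Fin.fin_one_eq_zero i, hπ.1]
    exact Ahead.refl d p
  | succ n ih =>
    cases i using Fin.cases with
    | zero =>
      rw [hπ.1]
      exact Ahead.refl d p
    | succ i =>
      obtain ⟨e, he, htail⟩ := exists_nextSteps_tail_mem hπ
      exact (ih htail i).of_add_stepVec (mem_filter.1 he).2.1

theorem cons_mem_excursionTails {π : Fin (n + 1) → ℤ × ℤ} {e : SignType} (hp : 0 ≤ p.2)
    (hde : d * e ≠ -1) (hπ : π ∈ excursionTails (p + stepVec e) e n) :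
    (Fin.cons p π : Fin (n + 2) → ℤ × ℤ) ∈ excursionTails p d (n + 1) := by
  have hahead := ahead_of_mem_excursionTails hπ
  obtain ⟨hstart, hstep, hinj, hnonneg, hend⟩ := hπ
  rw [add_sub_cancel_right] at hinj
  have hprev : p - stepVec d ∉ Set.range (Fin.cons p π : Fin (n + 2) → ℤ × ℤ) := by
    rw [Fin.range_cons, Set.mem_insert_iff, not_or]
    refine ⟨mt sub_eq_self.1 (stepVec_ne_zero d), ?_⟩
    rintro ⟨i, hi⟩
    exact not_ahead_sub_stepVec p hde (hi ▸ hahead i)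
  exact ⟨rfl, Fin.cases ⟨e, hstart⟩ hstep, Fin.cons_injective_iff.2 ⟨hprev, hinj⟩,
    Fin.cases hp hnonneg, hend⟩

theorem excursionTails_zero (hp : 0 ≤ p.2) :
    excursionTails p d 0 = if p.2 = 0 then {fun _ => p} else ∅ := by
  ext π
  have hconst (h : π 0 = p) : π = fun _ => p := funext fun i => by rw [Fin.fin_one_eq_zero i, h]
  split_ifs with h
  · refine ⟨fun hπ => hconst hπ.1, ?_⟩
    rintro rfl
    refine ⟨rfl, finZeroElim, Fin.cons_injective_iff.2 ⟨?_, ?_⟩,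
      fun _ => hp, h⟩
    · rintro ⟨_, hprev⟩
      exact stepVec_ne_zero d (sub_eq_self.1 hprev.symm)
    · exact fun _ _ _ => Subsingleton.elim (α := Fin 1) _ _
  · refine ⟨?_, fun hπ => hπ.elim⟩
    rintro ⟨hstart, -, -, -, hend⟩
    exact h (hstart ▸ hend)

theorem excursionTails_succ (hp : 0 ≤ p.2) :
    excursionTails p d (n + 1) =
      ⋃ e ∈ nextSteps d p.2, Fin.cons (α := fun _ => ℤ × ℤ) p ''
        excursionTails (p + stepVec e) e n := by
  ext π
  simp only [Set.mem_iUnion, exists_prop]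
  constructor
  · intro hπ
    obtain ⟨e, he, htail⟩ := exists_nextSteps_tail_mem hπ
    exact ⟨e, he, Fin.tail π, htail, by rw [← hπ.1, Fin.cons_self_tail]⟩
  · rintro ⟨e, he, π, hπ, rfl⟩
    exact cons_mem_excursionTails hp (mem_filter.1 he).2.1 hπ

theorem finite_excursionTails (hp : 0 ≤ p.2) : (excursionTails p d n).Finite := by
  induction n generalizing p d with
  | zero =>
    rw [excursionTails_zero hp]
    split_ifs <;> simp
  | succ n ih =>
    rw [excursionTails_succ hp]
    exact (nextSteps d p.2).finite_toSet.biUnion fun e he =>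
      (ih (mem_filter.1 he).2.2).image _

theorem ncard_excursionTails_succ (hp : 0 ≤ p.2) :
    (excursionTails p d (n + 1)).ncard =
      ∑ e ∈ nextSteps d p.2, (excursionTails (p + stepVec e) e n).ncard := by
  have hcons := Fin.cons_right_injective (α := fun _ : Fin (n + 2) => ℤ × ℤ) p
  have hfinite : ∀ e ∈ (nextSteps d p.2 : Set SignType),
      (Fin.cons (α := fun _ => ℤ × ℤ) p '' excursionTails (p + stepVec e) e n).Finite :=
    fun e he => (finite_excursionTails (mem_filter.1 he).2.2).image _
  have hdisjoint : (nextSteps d p.2 : Set SignType).PairwiseDisjoint fun e =>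
      Fin.cons (α := fun _ => ℤ × ℤ) p '' excursionTails (p + stepVec e) e n := by
    intro e _ e' _ hne
    refine (Set.disjoint_image_iff hcons).2 (Set.disjoint_left.2 fun π hπ hπ' => hne ?_)
    exact stepVec_injective (add_left_cancel (hπ.1.symm.trans hπ'.1))
  rw [excursionTails_succ hp]
  refine ((nextSteps d p.2).finite_toSet.ncard_biUnion hfinite hdisjoint).trans ?_
  rw [finsum_mem_coe_finset]
  exact sum_congr rfl fun e _ => Set.ncard_image_of_injective _ hcons

theorem ncard_excursionTails_zero (hp : 0 ≤ p.2) :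
    (excursionTails p d 0).ncard = if p.2 = 0 then 1 else 0 := by
  rw [excursionTails_zero hp]
  split_ifs <;> simp

end

theorem excSet_succ_eq_image (t : ℕ) :
    excSet (t + 1) = Fin.cons (α := fun _ => ℤ × ℤ) (0, 0) '' excursionTails (1, 0) 0 t := by
  have hstep (v : ℤ × ℤ) : (∃ e, v = stepVec e) ↔ v = (1, 0) ∨ v = (0, 1) ∨ v = (0, -1) := by
    constructor
    · rintro ⟨e, rfl⟩
      rcases e.trichotomy with rfl | rfl | rfl <;> simp [stepVec]
    · rintro (rfl | rfl | rfl)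
      exacts [⟨0, rfl⟩, ⟨1, rfl⟩, ⟨-1, rfl⟩]
  have hprev : ((1, 0) : ℤ × ℤ) - stepVec 0 = (0, 0) := rfl
  ext π
  constructor
  · rintro ⟨hstart, hfirst, hsteps, hinj, hnonneg, hend⟩
    have hcons : (Fin.cons (0, 0) (Fin.tail π) : Fin (t + 2) → ℤ × ℤ) = π := by
      rw [← hstart, Fin.cons_self_tail]
    refine ⟨Fin.tail π, ⟨hfirst t.succ_pos, fun i => ?_, ?_, fun i => hnonneg i.succ, hend⟩, hcons⟩
    · obtain ⟨e, he⟩ := (hstep _).2 (hsteps i.succ)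
      exact ⟨e, sub_eq_iff_eq_add'.1 he⟩
    · rwa [hprev, hcons]
  · rintro ⟨π, ⟨hstart, hsteps, hinj, hnonneg, hend⟩, rfl⟩
    refine ⟨rfl, fun _ => hstart, ?_, ?_, ?_, hend⟩
    · refine Fin.cases ((hstep _).1 ⟨0, ?_⟩) fun i => ?_
      · simp [stepVec, hstart]
      · obtain ⟨e, he⟩ := hsteps i
        exact (hstep _).1 ⟨e, sub_eq_iff_eq_add'.2 he⟩
    · rwa [hprev] at hinj
    · exact Fin.cases le_rfl hnonneg

theorem card_excSet_succ (t : ℕ) :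
    Nat.card (excSet (t + 1)) = (excursionTails (1, 0) 0 t).ncard := by
  rw [Nat.card_coe_set_eq, excSet_succ_eq_image,
    Set.ncard_image_of_injective _ (Fin.cons_right_injective _)]

/-- A positive eigenvector, for the eigenvalue `1 + √2`, of the matrix recording which of the three
steps may follow which in a partially directed path; it controls the growth of the number of such
paths. -/
noncomputable def growthWeight (d : SignType) : ℝ := if d = 0 then √2 else 1

theorem sum_nextSteps_growthWeight_le (d : SignType) (h : ℤ) :
    ∑ e ∈ nextSteps d h, growthWeight e ≤ (1 + √2) * growthWeight d := by
  have hsq : √2 * √2 = 2 := Real.mul_self_sqrt zero_le_two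
  calc ∑ e ∈ nextSteps d h, growthWeight e
      ≤ ∑ e with d * e ≠ -1, growthWeight e := by
        refine sum_le_sum_of_subset_of_nonneg (fun e he => ?_) fun e _ _ => ?_
        · exact mem_filter.2 ⟨mem_univ e, (mem_filter.1 he).2.1⟩
        · unfold growthWeight
          positivity
    _ = (1 + √2) * growthWeight d := by
        rcases d.trichotomy with rfl | rfl | rfl <;>
          simp [growthWeight, sum_filter, SignType.univ_eq] <;> linarith

/-- The coefficients of `tailSeries`, one for each possible last step. The tails after a north
(resp. south) step are those after an east step that do not begin with a south (resp. north) step;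
this expresses the coefficients for `1` and `-1` through the one for `0`, namely `c 1 = c 0 - 1` and
`c (-1) = c 0 - 2 * z ^ 2 * c 1 = 2`. The value `c 0 = z⁻¹` says that horizontal excursions have
total weight `1`. -/
noncomputable def tailCoeff (z : ℝ) : SignType → ℝ
  | 0 => z⁻¹
  | 1 => z⁻¹ - 1
  | -1 => 2

theorem tailCoeff_zero (z : ℝ) : tailCoeff z 0 = z⁻¹ := rfl

theorem tailCoeff_one (z : ℝ) : tailCoeff z 1 = z⁻¹ - 1 := rfl

theorem tailCoeff_neg_one (z : ℝ) : tailCoeff z (-1) = 2 := rfl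

/-- The generating series, in the weight `z` per step, of the excursion tails that follow a step `d`
ending at height `h`, provided that `2 * z + 2 * z ^ 2 - 2 * z ^ 3 = 1`. In a first-passage
decomposition each level to descend costs a factor `2 * z`. -/
noncomputable def tailSeries (z : ℝ) (d : SignType) (h : ℤ) : ℝ := tailCoeff z d * (2 * z) ^ h

theorem exists_critical_weight :
    ∃ z : ℝ, 0 < z ∧ z < √2 - 1 ∧ 2 * z + 2 * z ^ 2 - 2 * z ^ 3 = 1 := by
  have hsq : √2 ^ 2 = 2 := Real.sq_sqrt zero_le_two
  have hsqrt : √2 < 17 / 12 := by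
    rw [Real.sqrt_lt' (by norm_num)]
    norm_num
  let f : ℝ → ℝ := fun z => 2 * z + 2 * z ^ 2 - 2 * z ^ 3
  have hf : f (√2 - 1) = 18 - 12 * √2 := by
    grind
  have hone : (1 : ℝ) ∈ Set.Ioo (f 0) (f (√2 - 1)) := by
    refine ⟨by norm_num [f], ?_⟩
    rw [hf]
    linarith
  obtain ⟨z, ⟨hz, hz_lt⟩, hfz⟩ := intermediate_value_Ioo (by simp) (by fun_prop) hone
  exact ⟨z, hz, hz_lt, hfz⟩

section
variable {z : ℝ}

theorem lt_half_of_lt_sqrt_two_sub_one (hz : z < √2 - 1) : z < 1 / 2 := by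
  have hsqrt : √2 < 3 / 2 := by
    rw [Real.sqrt_lt' (by norm_num)]
    norm_num
  linarith

theorem tailCoeff_eq_sum_of_pos (d : SignType) {h : ℤ} (hz : 0 < z)
    (hcrit : 2 * z + 2 * z ^ 2 - 2 * z ^ 3 = 1) (hh : 0 < h) :
    tailCoeff z d = z * ∑ e ∈ nextSteps d h, tailCoeff z e * (2 * z) ^ (e : ℤ) := by
  rw [nextSteps_of_pos d hh]
  rcases d.trichotomy with rfl | rfl | rfl
  · rw [show ({e | -1 * e ≠ -1} : Finset SignType) = {-1, 0} by decide, sum_pair (by decide)]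
    simp only [tailCoeff_neg_one, tailCoeff_zero, SignType.coe_neg_one, SignType.coe_zero,
      zpow_neg_one, zpow_zero]
    field_simp
    norm_num
  · rw [show ({e | 0 * e ≠ -1} : Finset SignType) = {-1, 0, 1} by decide,
      sum_insert (by decide), sum_pair (by decide)]
    simp only [tailCoeff_neg_one, tailCoeff_zero, tailCoeff_one, SignType.coe_neg_one,
      SignType.coe_zero, SignType.coe_one, zpow_neg_one, zpow_zero, zpow_one]
    field_simp
    linear_combination -hcrit
  · rw [show ({e | 1 * e ≠ -1} : Finset SignType) = {0, 1} by decide, sum_pair (by decide)]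
    simp only [tailCoeff_zero, tailCoeff_one, SignType.coe_zero, SignType.coe_one, zpow_zero,
      zpow_one]
    field_simp
    linear_combination -hcrit

theorem tailCoeff_eq_one_add_sum {d : SignType} (hz : 0 < z)
    (hcrit : 2 * z + 2 * z ^ 2 - 2 * z ^ 3 = 1) (hd : d ≤ 0) :
    tailCoeff z d = 1 + z * ∑ e ∈ nextSteps d 0, tailCoeff z e * (2 * z) ^ (e : ℤ) := by
  rcases d.trichotomy with rfl | rfl | rfl
  · rw [show nextSteps (-1) 0 = {0} by decide, sum_singleton]
    simp only [tailCoeff_neg_one, tailCoeff_zero, SignType.coe_zero, zpow_zero]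
    field_simp
    norm_num
  · rw [show nextSteps 0 0 = {0, 1} by decide, sum_pair (by decide)]
    simp only [tailCoeff_zero, tailCoeff_one, SignType.coe_zero, SignType.coe_one, zpow_zero,
      zpow_one]
    field_simp
    linear_combination -hcrit
  · exact absurd hd (by decide)

theorem tailSeries_eq_add_sum {d : SignType} {h : ℤ} (hz : 0 < z)
    (hcrit : 2 * z + 2 * z ^ 2 - 2 * z ^ 3 = 1) (hh : 0 ≤ h) (hd : d ≤ h) :
    tailSeries z d h =
      (if h = 0 then 1 else 0) + z * ∑ e ∈ nextSteps d h, tailSeries z e (h + e) := by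
  have hdrop (e : SignType) :
      tailSeries z e (h + e) = tailCoeff z e * (2 * z) ^ (e : ℤ) * (2 * z) ^ h := by
    rw [tailSeries, zpow_add₀ (by positivity)]
    ring
  rw [sum_congr rfl fun e _ => hdrop e, ← sum_mul, ← mul_assoc]
  rcases hh.eq_or_lt with rfl | hpos
  · have hd' : d ≤ 0 := by
      rcases d.trichotomy with rfl | rfl | rfl <;> simp at hd ⊢
    simpa [tailSeries] using tailCoeff_eq_one_add_sum hz hcrit hd'
  · rw [if_neg hpos.ne', zero_add, ← tailCoeff_eq_sum_of_pos d hz hcrit hpos, tailSeries]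

theorem abs_tailSeries_le {d : SignType} {h : ℤ} (hz : 0 < z) (hz_lt : z < 1 / 2) (hh : 0 ≤ h) :
    |tailSeries z d h| ≤ z⁻¹ * growthWeight d := by
  have htwo : 2 ≤ z⁻¹ := (le_inv_comm₀ two_pos hz).2 (by linarith)
  have hcoeff : |tailCoeff z d| ≤ z⁻¹ := by
    rcases d.trichotomy with rfl | rfl | rfl
    · rwa [tailCoeff_neg_one, abs_two]
    · rw [tailCoeff_zero, abs_of_pos (inv_pos.2 hz)]
    · rw [tailCoeff_one, abs_of_nonneg (by linarith)]
      exact sub_le_self _ zero_le_one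
  have hpow : |(2 * z) ^ h| ≤ 1 := by
    rw [abs_of_pos (by positivity)]
    exact zpow_le_one₀ (by positivity) (by linarith) hh
  have hweight : 1 ≤ growthWeight d := by
    unfold growthWeight
    split_ifs
    exacts [Real.one_le_sqrt.2 one_le_two, le_rfl]
  calc |tailSeries z d h| = |tailCoeff z d| * |(2 * z) ^ h| := abs_mul _ _
    _ ≤ z⁻¹ * 1 := by gcongr
    _ ≤ z⁻¹ * growthWeight d := by gcongr

theorem hasSum_ncard_excursionTails {p : ℤ × ℤ} {d : SignType} (hz : 0 < z) (hz_lt : z < √2 - 1)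
    (hcrit : 2 * z + 2 * z ^ 2 - 2 * z ^ 3 = 1) (hp : 0 ≤ p.2) (hd : d ≤ p.2) :
    HasSum (fun n => z ^ n * (excursionTails p d n).ncard) (tailSeries z d p.2) := by
  have hhalf := lt_half_of_lt_sqrt_two_sub_one hz_lt
  refine hasSum_pow_mul_of_transfer (σ := (ℤ × ℤ) × SignType)
    (S := {s | 0 ≤ s.1.2 ∧ s.2 ≤ s.1.2}) (moves := fun s => nextSteps s.2 s.1.2)
    (next := fun s e => (s.1 + stepVec e, e)) (N := fun n s => (excursionTails s.1 s.2 n).ncard)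
    (V := fun s => tailSeries z s.2 s.1.2) (W := fun s => z⁻¹ * growthWeight s.2) (κ := 1 + √2)
    (s := (p, d)) ?_ ?_ ?_ ?_ ?_ ?_ hz.le (by positivity) ?_ ⟨hp, hd⟩
  · rintro s ⟨hs, -⟩ e he
    exact ⟨(mem_filter.1 he).2.2, by simpa [stepVec] using hs⟩
  · exact fun n => Nat.cast_nonneg _
  · rintro n s ⟨hs, -⟩
    exact_mod_cast ncard_excursionTails_succ hs
  · rintro s ⟨hs, hs'⟩
    simpa [ncard_excursionTails_zero hs, stepVec] using tailSeries_eq_add_sum hz hcrit hs hs'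
  · rintro s -
    rw [← mul_sum, mul_left_comm]
    gcongr
    exact sum_nextSteps_growthWeight_le _ _
  · rintro s ⟨hs, -⟩
    exact abs_tailSeries_le hz hhalf hs
  · have hsq : √2 * √2 = 2 := Real.mul_self_sqrt zero_le_two
    calc z * (1 + √2) < (√2 - 1) * (1 + √2) := by gcongr
      _ = 1 := by linarith

end

/-- **Existence of the critical exponent `λ*`:** there is `λ* > 0` with
`Σ_{t=1}^∞ 2^{−t}|I_t| e^{−λ* t} = 1`. -/
theorem exists_lambda_star :
    ∃ lam : ℝ, 0 < lam ∧
      ∑' t : ℕ, (1 / 2 : ℝ) ^ (t + 1) * Nat.card ↥(excSet (t + 1)) *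
        Real.exp (-lam * (t + 1)) = 1 := by
  obtain ⟨z, hz, hz_lt, hcrit⟩ := exists_critical_weight
  have hhalf := lt_half_of_lt_sqrt_two_sub_one hz_lt
  have hsum : HasSum (fun t : ℕ => z ^ t * (excursionTails (1, 0) 0 t).ncard) z⁻¹ := by
    simpa [tailSeries, tailCoeff_zero] using
      hasSum_ncard_excursionTails (p := (1, 0)) (d := 0) hz hz_lt hcrit le_rfl le_rfl
  refine ⟨-Real.log (2 * z), neg_pos.2 (Real.log_neg (by positivity) (by linarith)), ?_⟩
  have htotal := (hsum.mul_left z).tsum_eq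
  rw [mul_inv_cancel₀ hz.ne'] at htotal
  refine (tsum_congr fun t => ?_).trans htotal
  have hexp : Real.exp (- -Real.log (2 * z) * (t + 1)) = (2 * z) ^ (t + 1) := by
    rw [neg_neg, mul_comm, ← Nat.cast_succ, Real.exp_nat_mul, Real.exp_log (by positivity)]
  rw [hexp, card_excSet_succ, mul_right_comm, ← mul_pow, one_div, inv_mul_cancel_left₀ two_ne_zero,
    pow_succ', mul_assoc]
end
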